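/- arXiv:1512.01968 — 2 statements merged into one kernel-verified Lean document; each statement's English description precedes it below -/
import Mathlib

section
/- Fix f : X × Y → {0,1} on finite sets X, Y and a (not necessarily normalized) product measure μ : X × Y → [0,1] with |μ| > 0. Let ε, δ ∈ (0,1) and Δ ∈ (0,|μ|]. Let s, t be non-negative integers with s ≥ ⌈100·log₂(2·(srec^{0,μ}_{ε,δ}(f) + srec^{1,μ}_{ε,δ}(f)))⌉ and t ≥ ⌈100·2^s·log₂(|μ|/Δ)⌉. Then there exists a deterministic communication protocol Π such that L(Π) ≤ 4·binom(s+t, t) − 1 and adv_μ(Π) ≥ (1/10 − ε − 30(s+1)·δ^{1/4})·|μ| − Δ·L(Π). -/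
open scoped BigOperators
open scoped Classical

noncomputable section

/-! ## Probability distributions on finite types -/

/-- `p` is a probability distribution on the finite type `α`. -/
def IsDist {α : Type} [Fintype α] (p : α → ℝ) : Prop :=
  (∀ a, 0 ≤ p a) ∧ ∑ a, p a = 1

/-- `μ` (in curried form) is a probability distribution on `X × Y`. -/
def IsDist2 {X Y : Type} [Fintype X] [Fintype Y] (μ : X → Y → ℝ) : Prop :=
  (∀ x y, 0 ≤ μ x y) ∧ ∑ x, ∑ y, μ x y = 1

/-! ## Deterministic communication protocols -/

/-- A deterministic two-party communication protocol: a finite binary tree where each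
internal node is owned by Alice (`nodeA`) or Bob (`nodeB`) and is labeled by a function
of that player's input choosing one of the two children; leaves carry Boolean outputs. -/
inductive Protocol (X Y : Type) : Type
  | leaf : Bool → Protocol X Y
  | nodeA : (X → Bool) → Protocol X Y → Protocol X Y → Protocol X Y
  | nodeB : (Y → Bool) → Protocol X Y → Protocol X Y → Protocol X Y

namespace Protocol

def eval {X Y : Type} : Protocol X Y → X → Y → Bool
  | leaf b, _, _ => b
  | nodeA g t0 t1, x, y => if g x then eval t1 x y else eval t0 x y
  | nodeB g t0 t1, x, y => if g y then eval t1 x y else eval t0 x y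

/-- Depth (number of bits communicated in the worst case). -/
def depth {X Y : Type} : Protocol X Y → ℕ
  | leaf _ => 0
  | nodeA _ t0 t1 => max (depth t0) (depth t1) + 1
  | nodeB _ t0 t1 => max (depth t0) (depth t1) + 1

/-- Number of leaves. -/
def leavesCount {X Y : Type} : Protocol X Y → ℕ
  | leaf _ => 1
  | nodeA _ t0 t1 => leavesCount t0 + leavesCount t1
  | nodeB _ t0 t1 => leavesCount t0 + leavesCount t1

/-- The sequence of bits communicated on input `(x, y)`. -/
def transcript {X Y : Type} : Protocol X Y → X → Y → List Bool
  | leaf _, _, _ => []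
  | nodeA g t0 t1, x, y =>
      if g x then true :: transcript t1 x y else false :: transcript t0 x y
  | nodeB g t0 t1, x, y =>
      if g y then true :: transcript t1 x y else false :: transcript t0 x y

end Protocol

/-- Error of a deterministic protocol w.r.t. input distribution `μ`. -/
def commErr {X Y : Type} [Fintype X] [Fintype Y]
    (μ : X → Y → ℝ) (f : X → Y → Bool) (P : Protocol X Y) : ℝ :=
  ∑ x, ∑ y, if P.eval x y ≠ f x y then μ x y else 0

/-- Distributional communication complexity `CC^μ_ε(f)`: the minimum depth of a
deterministic protocol erring with probability at most `ε` under `μ`. -/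
def CCdist {X Y : Type} [Fintype X] [Fintype Y]
    (μ : X → Y → ℝ) (f : X → Y → Bool) (ε : ℝ) : ℕ :=
  sInf {d : ℕ | ∃ P : Protocol X Y, P.depth ≤ d ∧ commErr μ f P ≤ ε}

/-- The advantage `adv_μ(Π)` of a protocol w.r.t. a (not necessarily normalized) measure. -/
def protAdv {X Y : Type} [Fintype X] [Fintype Y]
    (μ : X → Y → ℝ) (f : X → Y → Bool) (P : Protocol X Y) : ℝ :=
  ∑ x, ∑ y, if P.eval x y = f x y then μ x y else - μ x y

/-! ## Information complexity -/

/-- Probability of an event under a finite (possibly unnormalized) distribution. -/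
def prOf {Ω : Type} [Fintype Ω] (p : Ω → ℝ) (q : Ω → Prop) : ℝ :=
  ∑ ω, if q ω then p ω else 0

/-- Conditional mutual information `I(A ; B | C)` (in bits) of random variables `A`, `B`, `C`
defined on a finite probability space `(Ω, p)`. -/
def condMI {Ω α β γ : Type} [Fintype Ω] (p : Ω → ℝ)
    (A : Ω → α) (B : Ω → β) (C : Ω → γ) : ℝ :=
  ∑ ω, p ω * Real.logb 2 (
    (prOf p (fun ω' => A ω' = A ω ∧ B ω' = B ω ∧ C ω' = C ω) *
      prOf p (fun ω' => C ω' = C ω)) /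
    (prOf p (fun ω' => A ω' = A ω ∧ C ω' = C ω) *
      prOf p (fun ω' => B ω' = B ω ∧ C ω' = C ω)))

/-- Internal information cost `IC^μ(Π) = I(X;T|Y) + I(Y;T|X)` of the public-coin protocol
given by a distribution `ρ` on `Fin m` together with deterministic protocols `P r`; the
transcript `T` consists of the public randomness together with the communicated bits. -/
def infoCost {X Y : Type} [Fintype X] [Fintype Y] (μ : X → Y → ℝ)
    {m : ℕ} (ρ : Fin m → ℝ) (P : Fin m → Protocol X Y) : ℝ :=
  condMI (fun ω : X × Y × Fin m => μ ω.1 ω.2.1 * ρ ω.2.2)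
      (fun ω => ω.1)
      (fun ω => (ω.2.2, (P ω.2.2).transcript ω.1 ω.2.1))
      (fun ω => ω.2.1)
  + condMI (fun ω : X × Y × Fin m => μ ω.1 ω.2.1 * ρ ω.2.2)
      (fun ω => ω.2.1)
      (fun ω => (ω.2.2, (P ω.2.2).transcript ω.1 ω.2.1))
      (fun ω => ω.1)

/-- Error of a public-coin protocol under input distribution `μ` and coin distribution `ρ`. -/
def randErr {X Y : Type} [Fintype X] [Fintype Y] (μ : X → Y → ℝ) (f : X → Y → Bool)
    {m : ℕ} (ρ : Fin m → ℝ) (P : Fin m → Protocol X Y) : ℝ :=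
  ∑ x, ∑ y, ∑ r, if (P r).eval x y ≠ f x y then μ x y * ρ r else 0

/-- `IC^μ_ε(f)`: infimum of the information cost over all public-coin protocols computing
`f` with error at most `ε` under `μ`. -/
def ICmu {X Y : Type} [Fintype X] [Fintype Y]
    (μ : X → Y → ℝ) (f : X → Y → Bool) (ε : ℝ) : ℝ :=
  sInf { c : ℝ | ∃ (m : ℕ) (ρ : Fin m → ℝ) (P : Fin m → Protocol X Y),
    IsDist ρ ∧ randErr μ f ρ P ≤ ε ∧ c = infoCost μ ρ P }

/-- `IC_ε(f) = max_μ IC^μ_ε(f)`. -/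
def IC {X Y : Type} [Fintype X] [Fintype Y] (f : X → Y → Bool) (ε : ℝ) : ℝ :=
  sSup { c : ℝ | ∃ μ : X → Y → ℝ, IsDist2 μ ∧ c = ICmu μ f ε }

/-! ## Rectangles, smooth rectangle bound and partition bound -/

/-- Total weight of rectangles containing `(x, y)`: a combinatorial rectangle is a pair
`R = (S, T)` of finite sets, and `(x,y) ∈ R` iff `x ∈ S ∧ y ∈ T`. -/
def rcov {X Y : Type} [Fintype X] [Fintype Y]
    (w : Finset X × Finset Y → ℝ) (x : X) (y : Y) : ℝ :=
  ∑ R : Finset X × Finset Y, if x ∈ R.1 ∧ y ∈ R.2 then w R else 0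

/-- `μ(R)` for a rectangle `R`. -/
def rMass {X Y : Type} [Fintype X] [Fintype Y]
    (μ : X → Y → ℝ) (R : Finset X × Finset Y) : ℝ :=
  ∑ x, ∑ y, if x ∈ R.1 ∧ y ∈ R.2 then μ x y else 0

/-- `μ_z(R) = μ(R ∩ f⁻¹(z))` for a rectangle `R`. -/
def rMassZ {X Y : Type} [Fintype X] [Fintype Y]
    (μ : X → Y → ℝ) (f : X → Y → Bool) (z : Bool) (R : Finset X × Finset Y) : ℝ :=
  ∑ x, ∑ y, if (x ∈ R.1 ∧ y ∈ R.2) ∧ f x y = z then μ x y else 0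

/-- `μ_z = μ(f⁻¹(z))`. -/
def totalZ {X Y : Type} [Fintype X] [Fintype Y]
    (μ : X → Y → ℝ) (f : X → Y → Bool) (z : Bool) : ℝ :=
  ∑ x, ∑ y, if f x y = z then μ x y else 0

/-- `|μ|`, the total mass of a measure. -/
def totalMass {X Y : Type} [Fintype X] [Fintype Y] (μ : X → Y → ℝ) : ℝ :=
  ∑ x, ∑ y, μ x y

/-- Restriction of a measure to a rectangle. -/
def restrictRect {X Y : Type} (μ : X → Y → ℝ) (R : Finset X × Finset Y) : X → Y → ℝ :=
  fun x y => if x ∈ R.1 ∧ y ∈ R.2 then μ x y else 0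

/-- Distributional smooth rectangle bound `srec^{z,μ}_{ε,δ}(f)` (LP optimal value). -/
def srecZmu {X Y : Type} [Fintype X] [Fintype Y]
    (μ : X → Y → ℝ) (f : X → Y → Bool) (z : Bool) (ε δ : ℝ) : ℝ :=
  sInf { v : ℝ | ∃ w : Finset X × Finset Y → ℝ,
    (∀ R, 0 ≤ w R) ∧
    ((1 - ε) * totalZ μ f z ≤ ∑ x, ∑ y, if f x y = z then μ x y * rcov w x y else 0) ∧
    (∀ x y, f x y ≠ z → rcov w x y ≤ δ) ∧
    (∀ x y, rcov w x y ≤ 1) ∧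
    v = ∑ R : Finset X × Finset Y, w R }

/-- `srec^μ_{ε,δ}(f) = max{srec^{0,μ}_{ε,δ}(f), srec^{1,μ}_{ε,δ}(f)}`. -/
def srecMu {X Y : Type} [Fintype X] [Fintype Y]
    (μ : X → Y → ℝ) (f : X → Y → Bool) (ε δ : ℝ) : ℝ :=
  max (srecZmu μ f false ε δ) (srecZmu μ f true ε δ)

/-- Smooth rectangle bound `srec^z_{ε,δ}(f)` (LP optimal value). -/
def srecZ {X Y : Type} [Fintype X] [Fintype Y]
    (f : X → Y → Bool) (z : Bool) (ε δ : ℝ) : ℝ :=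
  sInf { v : ℝ | ∃ w : Finset X × Finset Y → ℝ,
    (∀ R, 0 ≤ w R) ∧
    (∀ x y, f x y = z → 1 - ε ≤ rcov w x y) ∧
    (∀ x y, f x y ≠ z → rcov w x y ≤ δ) ∧
    (∀ x y, rcov w x y ≤ 1) ∧
    v = ∑ R : Finset X × Finset Y, w R }

/-- `srec_{ε,δ}(f) = max{srec^0_{ε,δ}(f), srec^1_{ε,δ}(f)}`. -/
def srec {X Y : Type} [Fintype X] [Fintype Y] (f : X → Y → Bool) (ε δ : ℝ) : ℝ :=
  max (srecZ f false ε δ) (srecZ f true ε δ)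

/-- Partition bound `prt_ε(f)` (LP optimal value). -/
def prt {X Y : Type} [Fintype X] [Fintype Y] (f : X → Y → Bool) (ε : ℝ) : ℝ :=
  sInf { v : ℝ | ∃ w : Bool → Finset X × Finset Y → ℝ,
    (∀ z R, 0 ≤ w z R) ∧
    (∀ x y, 1 - ε ≤ rcov (w (f x y)) x y) ∧
    (∀ x y, rcov (w false) x y + rcov (w true) x y = 1) ∧
    v = ∑ R : Finset X × Finset Y, (w false R + w true R) }

/-! ### General-output versions -/

/-- Smooth rectangle bound `srec^z_{ε,δ}(f)` for general output alphabet. -/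
def srecZgen {X Y Z : Type} [Fintype X] [Fintype Y]
    (f : X → Y → Z) (z : Z) (ε δ : ℝ) : ℝ :=
  sInf { v : ℝ | ∃ w : Finset X × Finset Y → ℝ,
    (∀ R, 0 ≤ w R) ∧
    (∀ x y, f x y = z → 1 - ε ≤ rcov w x y) ∧
    (∀ x y, f x y ≠ z → rcov w x y ≤ δ) ∧
    (∀ x y, rcov w x y ≤ 1) ∧
    v = ∑ R : Finset X × Finset Y, w R }

/-- `srec_{ε,δ}(f) = max_{z ∈ Z} srec^z_{ε,δ}(f)`. -/
def srecGen {X Y Z : Type} [Fintype X] [Fintype Y] [Fintype Z]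
    (f : X → Y → Z) (ε δ : ℝ) : ℝ :=
  sSup (Set.range fun z : Z => srecZgen f z ε δ)

/-- Distributional smooth rectangle bound for general output alphabet. -/
def srecZmuGen {X Y Z : Type} [Fintype X] [Fintype Y]
    (μ : X → Y → ℝ) (f : X → Y → Z) (z : Z) (ε δ : ℝ) : ℝ :=
  sInf { v : ℝ | ∃ w : Finset X × Finset Y → ℝ,
    (∀ R, 0 ≤ w R) ∧
    ((1 - ε) * (∑ x, ∑ y, if f x y = z then μ x y else 0) ≤
      ∑ x, ∑ y, if f x y = z then μ x y * rcov w x y else 0) ∧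
    (∀ x y, f x y ≠ z → rcov w x y ≤ δ) ∧
    (∀ x y, rcov w x y ≤ 1) ∧
    v = ∑ R : Finset X × Finset Y, w R }

/-- `srec^μ_{ε,δ}(f) = max_{z ∈ Z} srec^{z,μ}_{ε,δ}(f)`. -/
def srecMuGen {X Y Z : Type} [Fintype X] [Fintype Y] [Fintype Z]
    (μ : X → Y → ℝ) (f : X → Y → Z) (ε δ : ℝ) : ℝ :=
  sSup (Set.range fun z : Z => srecZmuGen μ f z ε δ)

/-- Partition bound for general output alphabet. -/
def prtGen {X Y Z : Type} [Fintype X] [Fintype Y] [Fintype Z]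
    (f : X → Y → Z) (ε : ℝ) : ℝ :=
  sInf { v : ℝ | ∃ w : Z → Finset X × Finset Y → ℝ,
    (∀ z R, 0 ≤ w z R) ∧
    (∀ x y, 1 - ε ≤ rcov (w (f x y)) x y) ∧
    (∀ x y, (∑ z : Z, rcov (w z) x y) = 1) ∧
    v = ∑ z : Z, ∑ R : Finset X × Finset Y, w z R }

/-! ## Decision trees, subcubes and the query partition bound -/

/-- Deterministic decision trees on `n` input bits. -/
inductive DTree (n : ℕ) : Type
  | leaf : Bool → DTree n
  | node : Fin n → DTree n → DTree n → DTree n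

def DTree.eval {n : ℕ} : DTree n → (Fin n → Bool) → Bool
  | .leaf b, _ => b
  | .node i t0 t1, x => if x i then DTree.eval t1 x else DTree.eval t0 x

def DTree.depth {n : ℕ} : DTree n → ℕ
  | .leaf _ => 0
  | .node _ t0 t1 => max (DTree.depth t0) (DTree.depth t1) + 1

/-- Error of a decision tree w.r.t. the input distribution `μ`. -/
def qErr {n : ℕ} (μ : (Fin n → Bool) → ℝ) (g : (Fin n → Bool) → Bool) (T : DTree n) : ℝ :=
  ∑ x, if T.eval x ≠ g x then μ x else 0

/-- Distributional query complexity `QC^μ_ε(g)`: minimum depth of a deterministic decision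
tree erring with probability at most `ε` under `μ`. -/
def QCdist {n : ℕ} (μ : (Fin n → Bool) → ℝ) (g : (Fin n → Bool) → Bool) (ε : ℝ) : ℕ :=
  sInf {d : ℕ | ∃ T : DTree n, T.depth ≤ d ∧ qErr μ g T ≤ ε}

/-- A subcube of `{0,1}ⁿ`, given by its support pattern `s ∈ {0,1,⋆}ⁿ`. -/
abbrev Subcube (n : ℕ) := Fin n → Option Bool

/-- Membership in a subcube. -/
def memCube {n : ℕ} (A : Subcube n) (x : Fin n → Bool) : Prop :=
  ∀ i, ∀ b, A i = some b → x i = b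

/-- Size of (the support of) a subcube. -/
def cubeSize {n : ℕ} (A : Subcube n) : ℕ :=
  (Finset.univ.filter fun i => (A i).isSome).card

/-- Total weight of subcubes containing `x`. -/
def cubeCov {n : ℕ} (w : Subcube n → ℝ) (x : Fin n → Bool) : ℝ :=
  ∑ A : Subcube n, if memCube A x then w A else 0

/-- Query partition bound `qprt_ε(g)` (LP optimal value). -/
def qprt {n : ℕ} (g : (Fin n → Bool) → Bool) (ε : ℝ) : ℝ :=
  sInf { v : ℝ | ∃ w : Bool → Subcube n → ℝ,
    (∀ z A, 0 ≤ w z A) ∧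
    (∀ x, 1 - ε ≤ cubeCov (w (g x)) x) ∧
    (∀ x, cubeCov (w false) x + cubeCov (w true) x = 1) ∧
    v = ∑ A : Subcube n, (w false A + w true A) * 2 ^ cubeSize A }

/-- The bit-wise product distribution on `{0,1}ⁿ` with `p_i(1) = p i`, `p_i(0) = 1 - p i`. -/
def bitProd {n : ℕ} (p : Fin n → ℝ) : (Fin n → Bool) → ℝ :=
  fun x => ∏ i, if x i then p i else 1 - p i

/-- `μ(A)` for a subcube (or any set given by a membership predicate). -/
def cubeMass {n : ℕ} (μ : (Fin n → Bool) → ℝ) (A : Subcube n) : ℝ :=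
  ∑ x, if memCube A x then μ x else 0

/-- `μ_z(A) = μ(A ∩ g⁻¹(z))` for a subcube `A`. -/
def cubeMassZ {n : ℕ} (μ : (Fin n → Bool) → ℝ) (g : (Fin n → Bool) → Bool)
    (z : Bool) (A : Subcube n) : ℝ :=
  ∑ x, if memCube A x ∧ g x = z then μ x else 0

/-- `μ_z = μ(g⁻¹(z))`. -/
def qTotalZ {n : ℕ} (μ : (Fin n → Bool) → ℝ) (g : (Fin n → Bool) → Bool) (z : Bool) : ℝ :=
  ∑ x, if g x = z then μ x else 0

/-- Mass of a finite set of pairs under the product measure `μA ⊗ μB`. -/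
def pairMass {X Y : Type} (μA : X → ℝ) (μB : Y → ℝ) (A : Finset (X × Y)) : ℝ :=
  ∑ q ∈ A, μA q.1 * μB q.2

end

/-! ## Product measures, coverings and advantage -/

section ProductMeasure

variable {X Y : Type} [Fintype X] [Fintype Y]

/-- Advantage of a protocol with respect to the product measure `A ⊗ B`. -/
noncomputable def prodAdv (f : X → Y → Bool) (A : X → ℝ) (B : Y → ℝ) (P : Protocol X Y) : ℝ :=
  ∑ x, ∑ y, A x * B y * (if P.eval x y = f x y then 1 else -1)

/-- The `A ⊗ B`-mass left uncovered when `f⁻¹(z)` is covered by the weights `w z`. -/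
noncomputable def uncovered (f : X → Y → Bool) (A : X → ℝ) (B : Y → ℝ)
    (w : Bool → Finset X × Finset Y → ℝ) : ℝ :=
  ∑ x, ∑ y, A x * B y * (1 - rcov (w (f x y)) x y)

/-- Restriction of a weight function to a finite set. -/
noncomputable def restrictTo {α : Type} (S : Finset α) (A : α → ℝ) : α → ℝ :=
  fun a => if a ∈ S then A a else 0

/-- Total weight of a pair of families of rectangles. -/
noncomputable def coverWeight (w : Bool → Finset X × Finset Y → ℝ) : ℝ :=
  ∑ z, ∑ R, w z R

/-- `w false` and `w true` satisfy the nonnegativity and packing constraints of the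
smooth rectangle program for the outputs `false` and `true`. -/
structure IsPacking (f : X → Y → Bool) (δ : ℝ) (w : Bool → Finset X × Finset Y → ℝ) :
    Prop where
  nonneg : ∀ z R, 0 ≤ w z R
  le_one : ∀ z x y, rcov (w z) x y ≤ 1
  le_off : ∀ z x y, f x y ≠ z → rcov (w z) x y ≤ δ

/-- Remove from the family for output `z` all rectangles in `D`. -/
noncomputable def dropRects (z : Bool) (D : Finset X × Finset Y → Prop)
    (w : Bool → Finset X × Finset Y → ℝ) : Bool → Finset X × Finset Y → ℝ :=
  fun z' R => if z' = z ∧ D R then 0 else w z' R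

theorem restrictTo_nonneg {α : Type} {S : Finset α} {A : α → ℝ} (hA : ∀ a, 0 ≤ A a) (a : α) :
    0 ≤ restrictTo S A a := by
  unfold restrictTo; split_ifs <;> simp [hA]

theorem sum_restrictTo {α : Type} [Fintype α] (S : Finset α) (A : α → ℝ) :
    ∑ a, restrictTo S A a = ∑ a ∈ S, A a := by
  simp [restrictTo]

theorem sum_compl_restrictTo {α : Type} [Fintype α] (S : Finset α) (A : α → ℝ) :
    ∑ a, restrictTo Sᶜ A a = ∑ a, A a - ∑ a ∈ S, A a := by
  rw [sum_restrictTo, ← Finset.sum_add_sum_compl S A]; ring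

theorem sum_mem_restrictTo_le {α : Type} [Fintype α] (S U : Finset α) {A : α → ℝ}
    (hA : ∀ a, 0 ≤ A a) : ∑ a ∈ U, restrictTo S A a ≤ ∑ a ∈ U, A a := by
  refine Finset.sum_le_sum fun a _ => ?_
  unfold restrictTo; split_ifs <;> simp [hA]

theorem sum_mul_rcov (g : X → Y → ℝ) (w : Finset X × Finset Y → ℝ) :
    ∑ x, ∑ y, g x y * rcov w x y = ∑ R, w R * rMass g R := by
  simp only [rcov, rMass, Finset.mul_sum]
  calc _ = ∑ x, ∑ R : Finset X × Finset Y, ∑ y,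
        g x y * (if x ∈ R.1 ∧ y ∈ R.2 then w R else 0) :=
        Finset.sum_congr rfl fun x _ => Finset.sum_comm
    _ = ∑ R : Finset X × Finset Y, ∑ x, ∑ y,
        g x y * (if x ∈ R.1 ∧ y ∈ R.2 then w R else 0) := Finset.sum_comm
    _ = _ := by
        refine Finset.sum_congr rfl fun R _ => Finset.sum_congr rfl fun x _ =>
          Finset.sum_congr rfl fun y _ => ?_
        split_ifs <;> ring

theorem rMass_prod (A : X → ℝ) (B : Y → ℝ) (R : Finset X × Finset Y) :
    rMass (fun x y => A x * B y) R = (∑ x ∈ R.1, A x) * ∑ y ∈ R.2, B y := by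
  rw [Finset.sum_mul_sum]
  simp only [rMass, ite_and]
  rw [← Finset.sum_filter_add_sum_filter_not Finset.univ (fun x => x ∈ R.1)]
  rw [Finset.sum_eq_zero (s := Finset.univ.filter fun x => ¬ x ∈ R.1)]
  · simp only [Finset.filter_univ_mem, add_zero]
    refine Finset.sum_congr rfl fun x hx => ?_
    simp [hx]
  · intro x hx
    simp [(Finset.mem_filter.1 hx).2]

theorem sum_prod_mul_rcov (A : X → ℝ) (B : Y → ℝ) (w : Finset X × Finset Y → ℝ) :
    ∑ x, ∑ y, A x * B y * rcov w x y =
      ∑ R, w R * ((∑ x ∈ R.1, A x) * ∑ y ∈ R.2, B y) := by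
  rw [sum_mul_rcov (fun x y => A x * B y)]
  simp only [rMass_prod]

theorem rcov_mono {w w' : Finset X × Finset Y → ℝ} (h : ∀ R, w R ≤ w' R) (x : X) (y : Y) :
    rcov w x y ≤ rcov w' x y := by
  unfold rcov
  refine Finset.sum_le_sum fun R _ => ?_
  split_ifs <;> simp [h]

theorem rcov_nonneg {w : Finset X × Finset Y → ℝ} (h : ∀ R, 0 ≤ w R) (x : X) (y : Y) :
    0 ≤ rcov w x y := by
  unfold rcov
  refine Finset.sum_nonneg fun R _ => ?_
  split_ifs <;> simp [h]

theorem prodAdv_leaf_not (f : X → Y → Bool) (A : X → ℝ) (B : Y → ℝ) (z : Bool) :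
    prodAdv f A B (.leaf (!z)) = - prodAdv f A B (.leaf z) := by
  unfold prodAdv
  rw [← Finset.sum_neg_distrib]
  refine Finset.sum_congr rfl fun x _ => ?_
  rw [← Finset.sum_neg_distrib]
  refine Finset.sum_congr rfl fun y _ => ?_
  cases z <;> cases f x y <;> simp [Protocol.eval]

theorem exists_leaf_prodAdv_nonneg (f : X → Y → Bool) (A : X → ℝ) (B : Y → ℝ) :
    ∃ z, 0 ≤ prodAdv f A B (.leaf z) := by
  by_contra! h
  have h0 := h false
  have h1 := h true
  have := prodAdv_leaf_not f A B false
  simp only [Bool.not_false] at this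
  linarith

theorem prodAdv_nodeA (f : X → Y → Bool) (A : X → ℝ) (B : Y → ℝ) (S : Finset X)
    (P Q : Protocol X Y) :
    prodAdv f A B (.nodeA (fun x => decide (x ∈ S)) P Q) =
      prodAdv f (restrictTo Sᶜ A) B P + prodAdv f (restrictTo S A) B Q := by
  unfold prodAdv
  simp only [← Finset.sum_add_distrib]
  refine Finset.sum_congr rfl fun x _ => Finset.sum_congr rfl fun y _ => ?_
  by_cases hx : x ∈ S <;> simp [restrictTo, hx, Protocol.eval]

theorem prodAdv_nodeB (f : X → Y → Bool) (A : X → ℝ) (B : Y → ℝ) (T : Finset Y)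
    (P Q : Protocol X Y) :
    prodAdv f A B (.nodeB (fun y => decide (y ∈ T)) P Q) =
      prodAdv f A (restrictTo Tᶜ B) P + prodAdv f A (restrictTo T B) Q := by
  unfold prodAdv
  simp only [← Finset.sum_add_distrib]
  refine Finset.sum_congr rfl fun x _ => Finset.sum_congr rfl fun y _ => ?_
  by_cases hy : y ∈ T <;> simp [restrictTo, hy, Protocol.eval]

theorem uncovered_splitA (f : X → Y → Bool) (A : X → ℝ) (B : Y → ℝ) (S : Finset X)
    (w : Bool → Finset X × Finset Y → ℝ) :
    uncovered f A B w =
      uncovered f (restrictTo Sᶜ A) B w + uncovered f (restrictTo S A) B w := by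
  unfold uncovered
  simp only [← Finset.sum_add_distrib]
  refine Finset.sum_congr rfl fun x _ => Finset.sum_congr rfl fun y _ => ?_
  by_cases hx : x ∈ S <;> simp [restrictTo, hx]

theorem uncovered_splitB (f : X → Y → Bool) (A : X → ℝ) (B : Y → ℝ) (T : Finset Y)
    (w : Bool → Finset X × Finset Y → ℝ) :
    uncovered f A B w =
      uncovered f A (restrictTo Tᶜ B) w + uncovered f A (restrictTo T B) w := by
  unfold uncovered
  simp only [← Finset.sum_add_distrib]
  refine Finset.sum_congr rfl fun x _ => Finset.sum_congr rfl fun y _ => ?_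
  by_cases hy : y ∈ T <;> simp [restrictTo, hy]

theorem uncovered_nonneg {f : X → Y → Bool} {A : X → ℝ} {B : Y → ℝ} {δ : ℝ}
    {w : Bool → Finset X × Finset Y → ℝ} (hA : ∀ x, 0 ≤ A x) (hB : ∀ y, 0 ≤ B y)
    (hw : IsPacking f δ w) : 0 ≤ uncovered f A B w :=
  Finset.sum_nonneg fun x _ => Finset.sum_nonneg fun y _ =>
    mul_nonneg (mul_nonneg (hA x) (hB y)) (sub_nonneg.2 (hw.le_one _ _ _))

theorem dropRects_le {f : X → Y → Bool} {δ : ℝ} {w : Bool → Finset X × Finset Y → ℝ}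
    (hw : IsPacking f δ w) (z : Bool) (D : Finset X × Finset Y → Prop) (z' : Bool)
    (R : Finset X × Finset Y) : dropRects z D w z' R ≤ w z' R := by
  unfold dropRects; split_ifs <;> simp [hw.nonneg]

theorem IsPacking.dropRects {f : X → Y → Bool} {δ : ℝ} {w : Bool → Finset X × Finset Y → ℝ}
    (hw : IsPacking f δ w) (z : Bool) (D : Finset X × Finset Y → Prop) :
    IsPacking f δ (dropRects z D w) where
  nonneg z' R := by unfold _root_.dropRects; split_ifs <;> simp [hw.nonneg]
  le_one z' x y := (rcov_mono (dropRects_le hw z D z') x y).trans (hw.le_one z' x y)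
  le_off z' x y h := (rcov_mono (dropRects_le hw z D z') x y).trans (hw.le_off z' x y h)

theorem coverWeight_dropRects (z : Bool) (D : Finset X × Finset Y → Prop)
    (w : Bool → Finset X × Finset Y → ℝ) :
    coverWeight (dropRects z D w) = coverWeight w - ∑ R, if D R then w z R else 0 := by
  have key : ∀ z', ∑ R, dropRects z D w z' R =
      ∑ R, w z' R - if z' = z then ∑ R, (if D R then w z R else 0) else 0 := by
    intro z'
    by_cases h : z' = z
    · subst h
      simp only [if_true, ← Finset.sum_sub_distrib]
      refine Finset.sum_congr rfl fun R _ => ?_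
      by_cases hD : D R <;> simp [dropRects, hD]
    · simp [dropRects, h]
  simp only [coverWeight, key, Finset.sum_sub_distrib]
  simp

theorem uncovered_dropRects_le {f : X → Y → Bool} {A : X → ℝ} {B : Y → ℝ} {δ : ℝ}
    {w : Bool → Finset X × Finset Y → ℝ} (hA : ∀ x, 0 ≤ A x) (hB : ∀ y, 0 ≤ B y)
    (hw : IsPacking f δ w) (z : Bool) (D : Finset X × Finset Y → Prop) :
    uncovered f A B (dropRects z D w) ≤ uncovered f A B w +
      ∑ R, (if D R then w z R else 0) * ((∑ x ∈ R.1, A x) * ∑ y ∈ R.2, B y) := by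
  rw [← sum_prod_mul_rcov]
  unfold uncovered
  simp only [← Finset.sum_add_distrib, ← mul_add]
  refine Finset.sum_le_sum fun x _ => Finset.sum_le_sum fun y _ =>
    mul_le_mul_of_nonneg_left ?_ (mul_nonneg (hA x) (hB y))
  by_cases h : f x y = z
  · have : rcov (w z) x y =
        rcov (dropRects z D w z) x y + rcov (fun R => if D R then w z R else 0) x y := by
      unfold rcov
      rw [← Finset.sum_add_distrib]
      refine Finset.sum_congr rfl fun R _ => ?_
      by_cases hD : D R <;> simp [dropRects, hD]
    rw [h]
    linarith
  · have h1 : rcov (dropRects z D w (f x y)) x y = rcov (w (f x y)) x y := by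
      simp [rcov, dropRects, h]
    have h2 : 0 ≤ rcov (fun R => if D R then w z R else 0) x y := by
      refine rcov_nonneg (fun R => ?_) x y
      split_ifs <;> simp [hw.nonneg]
    linarith

/-- The total rectangle mass counted with the weights of one output is at most `|A ⊗ B|`. -/
theorem sum_weight_mul_mass_le {f : X → Y → Bool} {A : X → ℝ} {B : Y → ℝ} {δ : ℝ}
    {w : Bool → Finset X × Finset Y → ℝ} (hA : ∀ x, 0 ≤ A x) (hB : ∀ y, 0 ≤ B y)
    (hw : IsPacking f δ w) (z : Bool) :
    ∑ R, w z R * ((∑ x ∈ R.1, A x) * ∑ y ∈ R.2, B y) ≤ (∑ x, A x) * ∑ y, B y := by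
  rw [← sum_prod_mul_rcov, Finset.sum_mul_sum]
  refine Finset.sum_le_sum fun x _ => Finset.sum_le_sum fun y _ => ?_
  exact mul_le_of_le_one_right (mul_nonneg (hA x) (hB y)) (hw.le_one _ _ _)

theorem mass_sub_uncovered_le {f : X → Y → Bool} {A : X → ℝ} {B : Y → ℝ} {δ : ℝ}
    {w : Bool → Finset X × Finset Y → ℝ} (hA : ∀ x, 0 ≤ A x) (hB : ∀ y, 0 ≤ B y)
    (hw : IsPacking f δ w) :
    (∑ x, A x) * (∑ y, B y) - uncovered f A B w ≤
      coverWeight w * ((∑ x, A x) * ∑ y, B y) := by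
  have h1 : (∑ x, A x) * (∑ y, B y) - uncovered f A B w ≤
      ∑ z, ∑ x, ∑ y, A x * B y * rcov (w z) x y := by
    rw [Finset.sum_mul_sum, uncovered, Fintype.sum_bool]
    simp only [← Finset.sum_add_distrib, ← Finset.sum_sub_distrib]
    refine Finset.sum_le_sum fun x _ => Finset.sum_le_sum fun y _ => ?_
    have hp := mul_nonneg (hA x) (hB y)
    have ht := mul_nonneg hp (rcov_nonneg (hw.nonneg true) x y)
    have hf := mul_nonneg hp (rcov_nonneg (hw.nonneg false) x y)
    cases f x y <;> nlinarith
  refine h1.trans ?_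
  simp only [sum_prod_mul_rcov]
  rw [coverWeight, Finset.sum_mul]
  refine Finset.sum_le_sum fun z _ => ?_
  rw [Finset.sum_mul]
  refine Finset.sum_le_sum fun R _ => mul_le_mul_of_nonneg_left ?_ (hw.nonneg z R)
  exact mul_le_mul (Finset.sum_le_univ_sum_of_nonneg hA) (Finset.sum_le_univ_sum_of_nonneg hB)
    (Finset.sum_nonneg fun y _ => hB y) (Finset.sum_nonneg fun x _ => hA x)


/-! ## Choosing a biased rectangle -/

/-- The mass of the `z`-inputs in a rectangle under `A ⊗ B`. -/
theorem rMassZ_add_rMassZ_not (f : X → Y → Bool) (A : X → ℝ) (B : Y → ℝ) (z : Bool)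
    (R : Finset X × Finset Y) :
    rMassZ (fun x y => A x * B y) f z R + rMassZ (fun x y => A x * B y) f (!z) R =
      (∑ x ∈ R.1, A x) * ∑ y ∈ R.2, B y := by
  rw [← rMass_prod]
  simp only [rMassZ, rMass, ← Finset.sum_add_distrib]
  refine Finset.sum_congr rfl fun x _ => Finset.sum_congr rfl fun y _ => ?_
  cases z <;> cases f x y <;> simp

theorem prodAdv_restrict_leaf (f : X → Y → Bool) (A : X → ℝ) (B : Y → ℝ) (z : Bool)
    (S : Finset X) (T : Finset Y) :
    prodAdv f (restrictTo S A) (restrictTo T B) (.leaf z) =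
      (∑ x ∈ S, A x) * (∑ y ∈ T, B y) -
        2 * rMassZ (fun x y => A x * B y) f (!z) (S, T) := by
  rw [← rMass_prod A B (S, T)]
  simp only [rMassZ, rMass, prodAdv, Finset.mul_sum, ← Finset.sum_sub_distrib]
  refine Finset.sum_congr rfl fun x _ => Finset.sum_congr rfl fun y _ => ?_
  by_cases hx : x ∈ S <;> by_cases hy : y ∈ T <;> cases z <;> cases f x y <;>
    simp [restrictTo, hx, hy, Protocol.eval] <;> ring

/-- If no constant protocol does well, then for each `z` some rectangle is large and
almost entirely contained in `f⁻¹(z)`. -/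
theorem exists_biased_rect {f : X → Y → Bool} {A : X → ℝ} {B : Y → ℝ} {δ : ℝ}
    {w : Bool → Finset X × Finset Y → ℝ} (hA : ∀ x, 0 ≤ A x) (hB : ∀ y, 0 ≤ B y)
    (hδ : 0 < δ) (hw : IsPacking f δ w) (hm : 0 < (∑ x, A x) * ∑ y, B y)
    (hleaf : ∀ z, prodAdv f A B (.leaf z) <
      1 / 10 * ((∑ x, A x) * ∑ y, B y) - uncovered f A B w) (z : Bool) :
    ∃ R : Finset X × Finset Y,
      rMassZ (fun x y => A x * B y) f (!z) R ≤
        10 * δ * ((∑ x ∈ R.1, A x) * ∑ y ∈ R.2, B y) ∧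
      1 / 5 * ((∑ x, A x) * ∑ y, B y) ≤
        coverWeight w * ((∑ x ∈ R.1, A x) * ∑ y ∈ R.2, B y) := by
  set m := (∑ x, A x) * ∑ y, B y with hmdef
  have hu := uncovered_nonneg hA hB hw
  have huless : uncovered f A B w < 1 / 10 * m := by
    obtain ⟨z', hz'⟩ := exists_leaf_prodAdv_nonneg f A B
    linarith [hleaf z']
  set g : X → Y → ℝ := fun x y => A x * B y * (if f x y = z then 1 else -(1 / (10 * δ))) with hg
  have hgR : ∀ R, rMass g R = rMassZ (fun x y => A x * B y) f z R -
      1 / (10 * δ) * rMassZ (fun x y => A x * B y) f (!z) R := by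
    intro R
    simp only [rMassZ, rMass, Finset.mul_sum, ← Finset.sum_sub_distrib]
    refine Finset.sum_congr rfl fun x _ => Finset.sum_congr rfl fun y _ => ?_
    by_cases hx : x ∈ R.1 <;> by_cases hy : y ∈ R.2 <;> cases z <;> cases h : f x y <;>
      simp [hx, hy, hg, h] <;> ring
  have hsum : 3 / 10 * m ≤ ∑ R, w z R * rMass g R := by
    rw [← sum_mul_rcov]
    have h1 : 1 / 2 * (m - prodAdv f A B (.leaf (!z))) - uncovered f A B w - 1 / 10 * m ≤
        ∑ x, ∑ y, g x y * rcov (w z) x y := by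
      rw [hmdef, Finset.sum_mul_sum, prodAdv, uncovered]
      simp only [Finset.mul_sum, ← Finset.sum_sub_distrib]
      refine Finset.sum_le_sum fun x _ => Finset.sum_le_sum fun y _ => ?_
      have hp := mul_nonneg (hA x) (hB y)
      simp only [hg]
      by_cases h : f x y = z
      · have hne : z ≠ !z := by cases z <;> simp
        simp only [h, Protocol.eval, if_neg hne.symm, if_true]
        linarith
      · have hz : (!z) = f x y := by cases z <;> cases h' : f x y <;> simp_all
        have h2 : rcov (w z) x y ≤ δ := hw.le_off z x y h
        have h3 : 1 / (10 * δ) * rcov (w z) x y ≤ 1 / 10 := by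
          rw [div_mul_eq_mul_div, div_le_iff₀ (by positivity)]; linarith
        have h4 : 0 ≤ 1 - rcov (w (f x y)) x y := sub_nonneg.2 (hw.le_one _ _ _)
        simp only [h, Protocol.eval, hz, if_true, if_false]
        nlinarith [mul_le_mul_of_nonneg_left h3 hp, mul_nonneg hp h4]
    have h2 := hleaf (!z)
    linarith
  have hwz : ∑ R, w z R ≤ coverWeight w :=
    Finset.single_le_sum (f := fun z => ∑ R, w z R)
      (fun z _ => Finset.sum_nonneg fun R _ => hw.nonneg z R) (Finset.mem_univ z)
  have hv0 : 0 ≤ ∑ R, w z R := Finset.sum_nonneg fun R _ => hw.nonneg z R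
  have hR : ∃ R, 1 / 5 * m ≤ coverWeight w * rMass g R := by
    by_contra! hcon
    have h1 : ∑ R, w z R * (coverWeight w * rMass g R) ≤ ∑ R, w z R * (1 / 5 * m) :=
      Finset.sum_le_sum fun R _ => mul_le_mul_of_nonneg_left (hcon R).le (hw.nonneg z R)
    have h2 : ∑ R, w z R * (coverWeight w * rMass g R) =
        coverWeight w * ∑ R, w z R * rMass g R := by
      rw [Finset.mul_sum]
      exact Finset.sum_congr rfl fun R _ => by ring
    rw [h2, ← Finset.sum_mul] at h1
    have h3 : 0 < coverWeight w := by
      rcases (hv0.trans hwz).eq_or_lt with h | h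
      · have h4 : ∀ R, w z R = 0 := fun R =>
          (Finset.sum_eq_zero_iff_of_nonneg (fun R _ => hw.nonneg z R)).1
            (le_antisymm (h ▸ hwz) hv0) R (Finset.mem_univ R)
        simp only [h4, zero_mul, Finset.sum_const_zero] at hsum
        linarith
      · exact h
    nlinarith [mul_le_mul_of_nonneg_left hsum h3.le, mul_pos h3 hm]
  obtain ⟨R, hR⟩ := hR
  have hv : 0 ≤ coverWeight w := hv0.trans hwz
  have hgpos : 0 < rMass g R := by
    by_contra! h
    nlinarith
  have hnn : ∀ z, 0 ≤ rMassZ (fun x y => A x * B y) f z R := fun z =>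
    Finset.sum_nonneg fun x _ => Finset.sum_nonneg fun y _ => by
      split_ifs
      · exact mul_nonneg (hA x) (hB y)
      · exact le_rfl
  have hadd := rMassZ_add_rMassZ_not f A B z R
  rw [hgR] at hR hgpos
  refine ⟨R, ?_, ?_⟩
  · have h1 : 1 / (10 * δ) * rMassZ (fun x y => A x * B y) f (!z) R ≤
        (∑ x ∈ R.1, A x) * ∑ y ∈ R.2, B y := by linarith [hnn (!z)]
    rw [div_mul_eq_mul_div, div_le_iff₀ (by positivity)] at h1
    linarith
  · refine hR.trans (mul_le_mul_of_nonneg_left ?_ hv)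
    have : 0 ≤ 1 / (10 * δ) * rMassZ (fun x y => A x * B y) f (!z) R :=
      mul_nonneg (by positivity) (hnn _)
    linarith [hnn (!z)]

/-! ## Rectangles that can be discarded -/

theorem sum_weight_mul_inter_le {f : X → Y → Bool} {A : X → ℝ} {B : Y → ℝ} {δ : ℝ}
    {w : Bool → Finset X × Finset Y → ℝ} (hA : ∀ x, 0 ≤ A x) (hB : ∀ y, 0 ≤ B y)
    (hδ : 0 < δ) (hw : IsPacking f δ w) (z : Bool) (R : Finset X × Finset Y) :
    ∑ Q, w z Q * ((∑ x ∈ Q.1, restrictTo R.1 A x) * ∑ y ∈ Q.2, restrictTo R.2 B y) ≤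
      δ * ((∑ x ∈ R.1, A x) * ∑ y ∈ R.2, B y) + rMassZ (fun x y => A x * B y) f z R := by
  rw [← sum_prod_mul_rcov, ← sum_restrictTo R.1 A, ← sum_restrictTo R.2 B, Finset.sum_mul_sum]
  simp only [rMassZ, Finset.mul_sum, ← Finset.sum_add_distrib]
  refine Finset.sum_le_sum fun x _ => Finset.sum_le_sum fun y _ => ?_
  have hp := mul_nonneg (hA x) (hB y)
  by_cases hx : x ∈ R.1 <;> by_cases hy : y ∈ R.2 <;> simp only [restrictTo, hx, hy, if_true,
    if_false, mul_zero, zero_mul, and_self, and_true, true_and, and_false, false_and,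
    add_zero, le_refl]
  by_cases h : f x y = z
  · rw [if_pos h]
    nlinarith [mul_le_mul_of_nonneg_left (hw.le_one z x y) hp]
  · rw [if_neg h]
    nlinarith [mul_le_mul_of_nonneg_left (hw.le_off z x y h) hp]

/-- Given a rectangle containing few `z`-inputs, a constant fraction of the `z`-rectangles is
negligible in total, or nearly avoids the rows of the given rectangle, or nearly avoids its
columns. -/
theorem exists_discardable {f : X → Y → Bool} {A : X → ℝ} {B : Y → ℝ} {d : ℝ}
    {w : Bool → Finset X × Finset Y → ℝ} (hA : ∀ x, 0 ≤ A x) (hB : ∀ y, 0 ≤ B y)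
    (hd : 0 < d) (hd' : d ≤ 1 / 300) (hw : IsPacking f (d ^ 4) w)
    (hm : 0 < (∑ x, A x) * ∑ y, B y) (z : Bool) (hz : coverWeight w ≤ 2 * ∑ Q, w z Q)
    (hv : 0 < coverWeight w) (R : Finset X × Finset Y)
    (hR : rMassZ (fun x y => A x * B y) f z R ≤
      10 * d ^ 4 * ((∑ x ∈ R.1, A x) * ∑ y ∈ R.2, B y))
    (hRpos : 0 < (∑ x ∈ R.1, A x) * ∑ y ∈ R.2, B y) :
    ∃ D : Finset X × Finset Y → Prop,
      coverWeight w / 20 ≤ ∑ Q, (if D Q then w z Q else 0) ∧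
      ((∀ Q, D Q → coverWeight w * ((∑ x ∈ Q.1, A x) * ∑ y ∈ Q.2, B y) ≤
          30 * d * ((∑ x, A x) * ∑ y, B y)) ∨
        (∀ Q, D Q → (∑ x ∈ Q.1, restrictTo R.1 A x) * (∑ x, A x) ≤
          d * ((∑ x ∈ Q.1, A x) * ∑ x ∈ R.1, A x)) ∨
        ∀ Q, D Q → (∑ y ∈ Q.2, restrictTo R.2 B y) * (∑ y, B y) ≤
          d * ((∑ y ∈ Q.2, B y) * ∑ y ∈ R.2, B y)) := by
  by_contra! hcon
  set v := coverWeight w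
  set a := ∑ x, A x
  set b := ∑ y, B y
  set S := ∑ x ∈ R.1, A x
  set T := ∑ y ∈ R.2, B y
  let D₁ : Finset X × Finset Y → Prop := fun Q =>
    v * ((∑ x ∈ Q.1, A x) * ∑ y ∈ Q.2, B y) ≤ 30 * d * (a * b)
  let D₂ : Finset X × Finset Y → Prop := fun Q =>
    (∑ x ∈ Q.1, restrictTo R.1 A x) * a ≤ d * ((∑ x ∈ Q.1, A x) * S)
  let D₃ : Finset X × Finset Y → Prop := fun Q =>
    (∑ y ∈ Q.2, restrictTo R.2 B y) * b ≤ d * ((∑ y ∈ Q.2, B y) * T)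
  have h₁ : ∑ Q, (if D₁ Q then w z Q else 0) < v / 20 := by
    by_contra! h
    obtain ⟨⟨Q, hQ, hQ'⟩, -⟩ := hcon D₁ h
    exact absurd hQ (not_le.2 hQ')
  have h₂ : ∑ Q, (if D₂ Q then w z Q else 0) < v / 20 := by
    by_contra! h
    obtain ⟨-, ⟨Q, hQ, hQ'⟩, -⟩ := hcon D₂ h
    exact absurd hQ (not_le.2 hQ')
  have h₃ : ∑ Q, (if D₃ Q then w z Q else 0) < v / 20 := by
    by_contra! h
    obtain ⟨-, -, Q, hQ, hQ'⟩ := hcon D₃ h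
    exact absurd hQ (not_le.2 hQ')
  have hS : 0 ≤ S := Finset.sum_nonneg fun x _ => hA x
  have hT : 0 ≤ T := Finset.sum_nonneg fun y _ => hB y
  have hab : ∀ Q : Finset X × Finset Y, ¬ D₁ Q → ¬ D₂ Q → ¬ D₃ Q →
      30 * d ^ 3 * (S * T) ≤
        v * ((∑ x ∈ Q.1, restrictTo R.1 A x) * ∑ y ∈ Q.2, restrictTo R.2 B y) := by
    intro Q n₁ n₂ n₃
    have n₁ := (not_le.1 n₁).le
    have n₂ := (not_le.1 n₂).le
    have n₃ := (not_le.1 n₃).le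
    have hU : 0 ≤ ∑ x ∈ Q.1, A x := Finset.sum_nonneg fun x _ => hA x
    have hV : 0 ≤ ∑ y ∈ Q.2, B y := Finset.sum_nonneg fun y _ => hB y
    generalize (∑ x ∈ Q.1, restrictTo R.1 A x) = u' at *
    generalize (∑ y ∈ Q.2, restrictTo R.2 B y) = v' at *
    generalize (∑ x ∈ Q.1, A x) = U at *
    generalize (∑ y ∈ Q.2, B y) = V at *
    have n₄ : d * (U * S) * (d * (V * T)) ≤ (u' * a) * (v' * b) :=
      mul_le_mul n₂ n₃ (by positivity) (le_trans (by positivity) n₂)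
    have n₅ := mul_le_mul_of_nonneg_left n₄ hv.le
    have n₆ := mul_le_mul_of_nonneg_left n₁ (show 0 ≤ d ^ 2 * (S * T) by positivity)
    refine le_of_mul_le_mul_left ?_ hm
    nlinarith
  have hpt : ∀ Q, w z Q * (30 * d ^ 3 * (S * T)) ≤
      (30 * d ^ 3 * (S * T)) * ((if D₁ Q then w z Q else 0) + (if D₂ Q then w z Q else 0) +
        (if D₃ Q then w z Q else 0)) +
      v * (w z Q * ((∑ x ∈ Q.1, restrictTo R.1 A x) * ∑ y ∈ Q.2, restrictTo R.2 B y)) := by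
    intro Q
    have hwQ := hw.nonneg z Q
    have hc : 0 ≤ 30 * d ^ 3 * (S * T) := by positivity
    have hwc := mul_nonneg hwQ hc
    have hnn : 0 ≤ v * (w z Q *
        ((∑ x ∈ Q.1, restrictTo R.1 A x) * ∑ y ∈ Q.2, restrictTo R.2 B y)) :=
      mul_nonneg hv.le (mul_nonneg hwQ (mul_nonneg
        (Finset.sum_nonneg fun x _ => restrictTo_nonneg hA x)
        (Finset.sum_nonneg fun y _ => restrictTo_nonneg hB y)))
    by_cases n₁ : D₁ Q <;> by_cases n₂ : D₂ Q <;> by_cases n₃ : D₃ Q <;>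
      simp only [n₁, n₂, n₃, if_true, if_false] <;> try nlinarith
    have := mul_le_mul_of_nonneg_left (hab Q n₁ n₂ n₃) hwQ
    linarith
  have hsum := Finset.sum_le_sum fun Q (_ : Q ∈ Finset.univ) => hpt Q
  rw [← Finset.sum_mul, Finset.sum_add_distrib, ← Finset.mul_sum, ← Finset.mul_sum,
    Finset.sum_add_distrib, Finset.sum_add_distrib] at hsum
  have hint := sum_weight_mul_inter_le hA hB (pow_pos hd 4) hw z R
  have hlast : v * ∑ Q, w z Q *
      ((∑ x ∈ Q.1, restrictTo R.1 A x) * ∑ y ∈ Q.2, restrictTo R.2 B y) ≤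
      v * (11 * d ^ 4 * (S * T)) := mul_le_mul_of_nonneg_left (by linarith) hv.le
  have hc : 0 < 30 * d ^ 3 * (S * T) := by positivity
  have hfin : (30 * d ^ 3 * (S * T)) * (v / 2) <
      (30 * d ^ 3 * (S * T)) * (3 * (v / 20) + v / 20) := by
    have e₁ : v * (11 * d ^ 4 * (S * T)) = (30 * d ^ 3 * (S * T)) * (v * (11 * d / 30)) := by ring
    have e₂ : v * (11 * d / 30) ≤ v / 20 := by nlinarith
    have e₃ := mul_le_mul_of_nonneg_left e₂ hc.le
    have e₄ := mul_lt_mul_of_pos_left (add_lt_add (add_lt_add h₁ h₂) h₃) hc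
    have e₅ := mul_le_mul_of_nonneg_right (show v / 2 ≤ ∑ Q, w z Q by linarith) hc.le
    linarith
  have := lt_of_mul_lt_mul_left hfin hc.le
  linarith

theorem loss_restrictA_le {f : X → Y → Bool} {A : X → ℝ} {B : Y → ℝ} {δ d : ℝ}
    {w : Bool → Finset X × Finset Y → ℝ} (hA : ∀ x, 0 ≤ A x) (hB : ∀ y, 0 ≤ B y)
    (hd : 0 ≤ d) (hw : IsPacking f δ w) (ha : 0 < ∑ x, A x) (z : Bool)
    (S : Finset X) (T : Finset Y) (D : Finset X × Finset Y → Prop)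
    (hD : ∀ Q, D Q → (∑ x ∈ Q.1, restrictTo S A x) * (∑ x, A x) ≤
      d * ((∑ x ∈ Q.1, A x) * ∑ x ∈ S, A x)) :
    ∑ Q, (if D Q then w z Q else 0) *
      ((∑ x ∈ Q.1, restrictTo S A x) * ∑ y ∈ Q.2, restrictTo T B y) ≤
        d * ((∑ x ∈ S, A x) * ∑ y, B y) := by
  have hS : 0 ≤ ∑ x ∈ S, A x := Finset.sum_nonneg fun x _ => hA x
  refine le_of_mul_le_mul_left ?_ ha
  calc _ ≤ ∑ Q, (d * ∑ x ∈ S, A x) * (w z Q * ((∑ x ∈ Q.1, A x) * ∑ y ∈ Q.2, B y)) := by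
        rw [Finset.mul_sum]
        refine Finset.sum_le_sum fun Q _ => ?_
        have hU : 0 ≤ ∑ x ∈ Q.1, A x := Finset.sum_nonneg fun x _ => hA x
        have hV : 0 ≤ ∑ y ∈ Q.2, B y := Finset.sum_nonneg fun y _ => hB y
        have hwQ := hw.nonneg z Q
        by_cases h : D Q
        · have h1 := mul_le_mul (hD Q h) (sum_mem_restrictTo_le T Q.2 hB)
            (Finset.sum_nonneg fun y _ => restrictTo_nonneg hB y) (by positivity)
          have h2 := mul_le_mul_of_nonneg_left h1 hwQ
          rw [if_pos h]
          linarith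
        · rw [if_neg h, zero_mul, mul_zero]
          positivity
    _ ≤ (d * ∑ x ∈ S, A x) * ((∑ x, A x) * ∑ y, B y) := by
        rw [← Finset.mul_sum]
        exact mul_le_mul_of_nonneg_left (sum_weight_mul_mass_le hA hB hw z) (mul_nonneg hd hS)
    _ = _ := by ring

theorem loss_restrictB_le {f : X → Y → Bool} {A : X → ℝ} {B : Y → ℝ} {δ d : ℝ}
    {w : Bool → Finset X × Finset Y → ℝ} (hA : ∀ x, 0 ≤ A x) (hB : ∀ y, 0 ≤ B y)
    (hd : 0 ≤ d) (hw : IsPacking f δ w) (hb : 0 < ∑ y, B y) (z : Bool)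
    (S : Finset X) (T : Finset Y) (D : Finset X × Finset Y → Prop)
    (hD : ∀ Q, D Q → (∑ y ∈ Q.2, restrictTo T B y) * (∑ y, B y) ≤
      d * ((∑ y ∈ Q.2, B y) * ∑ y ∈ T, B y)) :
    ∑ Q, (if D Q then w z Q else 0) *
      ((∑ x ∈ Q.1, restrictTo S A x) * ∑ y ∈ Q.2, restrictTo T B y) ≤
        d * ((∑ x, A x) * ∑ y ∈ T, B y) := by
  have hT : 0 ≤ ∑ y ∈ T, B y := Finset.sum_nonneg fun y _ => hB y
  refine le_of_mul_le_mul_left ?_ hb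
  calc _ ≤ ∑ Q, (d * ∑ y ∈ T, B y) * (w z Q * ((∑ x ∈ Q.1, A x) * ∑ y ∈ Q.2, B y)) := by
        rw [Finset.mul_sum]
        refine Finset.sum_le_sum fun Q _ => ?_
        have hU : 0 ≤ ∑ x ∈ Q.1, A x := Finset.sum_nonneg fun x _ => hA x
        have hV : 0 ≤ ∑ y ∈ Q.2, B y := Finset.sum_nonneg fun y _ => hB y
        have hwQ := hw.nonneg z Q
        by_cases h : D Q
        · have h1 := mul_le_mul (hD Q h) (sum_mem_restrictTo_le S Q.1 hA)
            (Finset.sum_nonneg fun x _ => restrictTo_nonneg hA x) (by positivity)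
          have h2 := mul_le_mul_of_nonneg_left h1 hwQ
          rw [if_pos h]
          linarith
        · rw [if_neg h, zero_mul, mul_zero]
          positivity
    _ ≤ (d * ∑ y ∈ T, B y) * ((∑ x, A x) * ∑ y, B y) := by
        rw [← Finset.mul_sum]
        exact mul_le_mul_of_nonneg_left (sum_weight_mul_mass_le hA hB hw z) (mul_nonneg hd hT)
    _ = _ := by ring

/-! ## Numerical estimates -/

theorem two_rpow_le_one_add {y : ℝ} (h0 : 0 ≤ y) (h1 : y ≤ 1) : (2 : ℝ) ^ y ≤ 1 + y := by
  have := _root_.rpow_one_add_le_one_add_mul_self (s := 1) (by norm_num) h0 h1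
  rwa [one_add_one_eq_two, mul_one] at this

theorem weight_bound_pred {s : ℕ} {v v' : ℝ} (hv : 4 * v ≤ 3 * (2 : ℝ) ^ (((s + 1 : ℕ) : ℝ) / 100))
    (hv' : v' ≤ v - v / 20) : 4 * v' ≤ 3 * (2 : ℝ) ^ ((s : ℝ) / 100) := by
  have h1 : (2 : ℝ) ^ (((s + 1 : ℕ) : ℝ) / 100) = 2 ^ ((s : ℝ) / 100) * 2 ^ ((1 : ℝ) / 100) := by
    rw [← Real.rpow_add two_pos]; push_cast; ring_nf
  have h2 := two_rpow_le_one_add (y := 1 / 100) (by norm_num) (by norm_num)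
  have h3 : (0 : ℝ) < 2 ^ ((s : ℝ) / 100) := Real.rpow_pos_of_pos two_pos _
  have h4 := mul_le_mul_of_nonneg_left h2 h3.le
  linarith

theorem mass_bound_pred_left {s t : ℕ} {m m' Δ : ℝ} (hΔ : 0 < Δ) (hm' : m' ≤ m)
    (hm : m ≤ Δ * (2 : ℝ) ^ ((t : ℝ) / (100 * 2 ^ (s + 1)))) :
    m' ≤ Δ * (2 : ℝ) ^ ((t : ℝ) / (100 * 2 ^ s)) := by
  refine hm'.trans (hm.trans (mul_le_mul_of_nonneg_left ?_ hΔ.le))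
  refine Real.rpow_le_rpow_of_exponent_le one_le_two ?_
  gcongr
  · norm_num
  · omega

theorem mass_bound_pred_right {s t : ℕ} {v m m' p Δ : ℝ} (hm0 : 0 < m)
    (hm : m ≤ Δ * (2 : ℝ) ^ (((t + 1 : ℕ) : ℝ) / (100 * 2 ^ s)))
    (hv : 4 * v ≤ 3 * (2 : ℝ) ^ ((s : ℝ) / 100)) (hp : 0 < p) (hvp : 1 / 5 * m ≤ v * p)
    (hm' : m' ≤ m - p) : m' ≤ Δ * (2 : ℝ) ^ ((t : ℝ) / (100 * 2 ^ s)) := by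
  have hN : (1 : ℝ) ≤ 2 ^ s := one_le_pow₀ one_le_two
  set y : ℝ := 1 / (100 * 2 ^ s) with hy
  have hy0 : 0 < y := by positivity
  have hyN : y * 2 ^ s = 1 / 100 := by rw [hy]; field_simp
  have hy1 : y ≤ 1 := by nlinarith
  have h1 : (2 : ℝ) ^ ((s : ℝ) / 100) ≤ 2 ^ s := by
    rw [← Real.rpow_natCast]
    exact Real.rpow_le_rpow_of_exponent_le one_le_two
      (div_le_self (Nat.cast_nonneg s) (by norm_num))
  have h2 : y * m ≤ p := by
    have h3 : v * p ≤ 3 / 4 * 2 ^ s * p := mul_le_mul_of_nonneg_right (by linarith) hp.le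
    have h4 := mul_le_mul_of_nonneg_left (hvp.trans h3) hy0.le
    have h5 : y * (3 / 4 * 2 ^ s * p) = 3 / 4 * (y * 2 ^ s) * p := by ring
    rw [h5, hyN] at h4
    linarith
  have h6 : (2 : ℝ) ^ (((t + 1 : ℕ) : ℝ) / (100 * 2 ^ s)) =
      2 ^ ((t : ℝ) / (100 * 2 ^ s)) * 2 ^ y := by
    rw [← Real.rpow_add two_pos, hy]; push_cast; ring_nf
  have h7 := two_rpow_le_one_add hy0.le hy1
  have h8 : (0 : ℝ) < 2 ^ y := Real.rpow_pos_of_pos two_pos _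
  refine le_of_mul_le_mul_right ?_ h8
  rw [mul_assoc, ← h6]
  refine le_trans ?_ hm
  calc m' * 2 ^ y ≤ (m * (1 - y)) * 2 ^ y := mul_le_mul_of_nonneg_right (by linarith) h8.le
    _ ≤ (m * (1 - y)) * (1 + y) :=
        mul_le_mul_of_nonneg_left h7 (mul_nonneg hm0.le (by linarith))
    _ ≤ m := by nlinarith [mul_pos hm0 (mul_pos hy0 hy0)]

/-- Combining the advantages on the three parts of the input space: the part with smaller mass,
the part with a cheaper packing, and the biased rectangle. -/
theorem combine_advantages {c d Δ m₁ m₂ p u₁ u₂ u₂' u₃ L₁ L₂ a₁ a₂ q l : ℝ} (hd : 0 < d)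
    (hd' : d ≤ 1 / 300) (hc : c + 30 * d ≤ 1 / 10) (hm₂ : 0 ≤ m₂) (hp : 0 ≤ p) (hΔ : 0 < Δ)
    (h₁ : c * m₁ - u₁ - Δ * L₁ ≤ a₁) (h₂ : (c + 30 * d) * m₂ - u₂' - Δ * L₂ ≤ a₂)
    (hu : u₂' ≤ u₂ + l) (hl : l ≤ d * (m₂ + p)) (hu₃ : 0 ≤ u₃) (hq : q ≤ 10 * d ^ 4 * p) :
    c * (m₁ + (m₂ + p)) - (u₁ + (u₂ + u₃)) - Δ * (L₁ + (L₂ + 1)) ≤ a₁ + (a₂ + (p - 2 * q)) := by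
  have h3 : 0 ≤ d * m₂ := mul_nonneg hd.le hm₂
  have h4 : d * p ≤ 1 / 300 * p := mul_le_mul_of_nonneg_right hd' hp
  have h5 : d ^ 4 * p ≤ 1 / 300 * p := by
    refine mul_le_mul_of_nonneg_right ?_ hp
    exact (pow_le_of_le_one hd.le (by linarith) (by norm_num)).trans hd'
  have h6 : c * p ≤ 1 / 10 * p := mul_le_mul_of_nonneg_right (by linarith) hp
  linarith

/-! ## The inductive construction -/

theorem choose_step {L₁ L₂ s t : ℕ} (h₁ : L₁ + 1 ≤ 4 * (s + 1 + t).choose t)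
    (h₂ : L₂ + 1 ≤ 4 * (s + (t + 1)).choose (t + 1)) :
    L₁ + (L₂ + 1) + 1 ≤ 4 * (s + 1 + (t + 1)).choose (t + 1) := by
  have h3 : (s + 1 + (t + 1)).choose (t + 1) =
      (s + 1 + t).choose t + (s + 1 + t).choose (t + 1) := Nat.choose_succ_succ (s + 1 + t) t
  have h4 : s + (t + 1) = s + 1 + t := by omega
  rw [h4] at h₂
  omega

theorem exists_protocol_of_packing (f : X → Y → Bool) {d Δ : ℝ} (hd : 0 < d)
    (hd' : d ≤ 1 / 300) (hΔ : 0 < Δ) (s t : ℕ) (A : X → ℝ) (B : Y → ℝ)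
    (w : Bool → Finset X × Finset Y → ℝ) (hA : ∀ x, 0 ≤ A x) (hB : ∀ y, 0 ≤ B y)
    (hw : IsPacking f (d ^ 4) w)
    (hv : 4 * coverWeight w ≤ 3 * (2 : ℝ) ^ ((s : ℝ) / 100))
    (hm : (∑ x, A x) * (∑ y, B y) ≤ Δ * (2 : ℝ) ^ ((t : ℝ) / (100 * 2 ^ s))) :
    ∃ P : Protocol X Y, P.leavesCount + 1 ≤ 4 * (s + t).choose t ∧
      (1 / 10 - 30 * ((s : ℝ) + 1) * d) * ((∑ x, A x) * ∑ y, B y) - uncovered f A B w -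
        Δ * P.leavesCount ≤ prodAdv f A B P := by
  have trivial_protocol : ∀ (s t : ℕ) (A : X → ℝ) (B : Y → ℝ)
      (w : Bool → Finset X × Finset Y → ℝ), (∀ x, 0 ≤ A x) → (∀ y, 0 ≤ B y) →
      (∃ z, 1 / 10 * ((∑ x, A x) * ∑ y, B y) - uncovered f A B w - Δ ≤
        prodAdv f A B (.leaf z)) →
      ∃ P : Protocol X Y, P.leavesCount + 1 ≤ 4 * (s + t).choose t ∧
        (1 / 10 - 30 * ((s : ℝ) + 1) * d) * ((∑ x, A x) * ∑ y, B y) - uncovered f A B w -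
          Δ * P.leavesCount ≤ prodAdv f A B P := by
    rintro s t A B w hA hB ⟨z, hz⟩
    refine ⟨.leaf z, ?_, ?_⟩
    · have := Nat.choose_pos (Nat.le_add_left t s)
      simp only [Protocol.leavesCount]
      omega
    · have h1 : 0 ≤ (∑ x, A x) * ∑ y, B y :=
        mul_nonneg (Finset.sum_nonneg fun x _ => hA x) (Finset.sum_nonneg fun y _ => hB y)
      have h2 : 0 ≤ 30 * ((s : ℝ) + 1) * d * ((∑ x, A x) * ∑ y, B y) := by positivity
      simp only [Protocol.leavesCount, Nat.cast_one, mul_one]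
      linarith
  induction s generalizing t A B w with
  | zero =>
    refine trivial_protocol 0 t A B w hA hB ?_
    obtain ⟨z, hz⟩ := exists_leaf_prodAdv_nonneg f A B
    have h1 : 0 ≤ (∑ x, A x) * ∑ y, B y :=
      mul_nonneg (Finset.sum_nonneg fun x _ => hA x) (Finset.sum_nonneg fun y _ => hB y)
    have h2 := mass_sub_uncovered_le hA hB hw
    simp only [Nat.cast_zero, zero_div, Real.rpow_zero, mul_one] at hv
    have h3 := mul_le_mul_of_nonneg_right (show coverWeight w ≤ 3 / 4 by linarith) h1
    exact ⟨z, by linarith⟩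
  | succ s ihs =>
  induction t generalizing A B w with
  | zero =>
    refine trivial_protocol (s + 1) 0 A B w hA hB ?_
    obtain ⟨z, hz⟩ := exists_leaf_prodAdv_nonneg f A B
    have h1 := uncovered_nonneg hA hB hw
    simp only [Nat.cast_zero, zero_div, Real.rpow_zero, mul_one] at hm
    exact ⟨z, by linarith⟩
  | succ t iht =>
  by_cases hleaf : ∃ z, 1 / 10 * ((∑ x, A x) * ∑ y, B y) - uncovered f A B w ≤
      prodAdv f A B (.leaf z)
  · obtain ⟨z, hz⟩ := hleaf
    exact trivial_protocol (s + 1) (t + 1) A B w hA hB ⟨z, by linarith⟩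
  push Not at hleaf
  have ha0 : 0 ≤ ∑ x, A x := Finset.sum_nonneg fun x _ => hA x
  have hb0 : 0 ≤ ∑ y, B y := Finset.sum_nonneg fun y _ => hB y
  have hm0 : 0 < (∑ x, A x) * ∑ y, B y := by
    by_contra! h
    obtain ⟨z, hz⟩ := exists_leaf_prodAdv_nonneg f A B
    linarith [hleaf z, uncovered_nonneg hA hB hw]
  have ha : 0 < ∑ x, A x := pos_of_mul_pos_left hm0 hb0
  have hb : 0 < ∑ y, B y := pos_of_mul_pos_right hm0 ha0
  obtain ⟨z, hz⟩ : ∃ z, coverWeight w ≤ 2 * ∑ Q, w z Q := by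
    by_contra! h
    have h1 := h true
    have h2 := h false
    rw [coverWeight, Fintype.sum_bool] at h1 h2
    linarith
  obtain ⟨⟨S, T⟩, hq, hlarge⟩ := exists_biased_rect hA hB (pow_pos hd 4) hw hm0 hleaf (!z)
  rw [Bool.not_not] at hq
  dsimp only at hq hlarge
  have hS : 0 ≤ ∑ x ∈ S, A x := Finset.sum_nonneg fun x _ => hA x
  have hT : 0 ≤ ∑ y ∈ T, B y := Finset.sum_nonneg fun y _ => hB y
  have hvR : 0 < coverWeight w * ((∑ x ∈ S, A x) * ∑ y ∈ T, B y) :=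
    lt_of_lt_of_le (by positivity) hlarge
  have hv0 : 0 < coverWeight w := pos_of_mul_pos_left hvR (mul_nonneg hS hT)
  have hR0 : 0 < (∑ x ∈ S, A x) * ∑ y ∈ T, B y := pos_of_mul_pos_right hvR hv0.le
  have hSa : ∑ x ∈ S, A x ≤ ∑ x, A x := Finset.sum_le_univ_sum_of_nonneg hA
  have hTb : ∑ y ∈ T, B y ≤ ∑ y, B y := Finset.sum_le_univ_sum_of_nonneg hB
  have hp1 := mul_le_mul_of_nonneg_left hTb hS
  have hp2 := mul_le_mul_of_nonneg_right hSa hT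
  have hp3 := mul_le_mul_of_nonneg_left hTb ha0
  obtain ⟨D, hDw, hD⟩ := exists_discardable hA hB hd hd' hw hm0 z hz hv0 (S, T) hq hR0
  dsimp only at hD
  have hw' := hw.dropRects z D
  have hv' : 4 * coverWeight (dropRects z D w) ≤ 3 * (2 : ℝ) ^ ((s : ℝ) / 100) := by
    refine weight_bound_pred hv ?_
    rw [coverWeight_dropRects]
    linarith
  have hc : 1 / 10 - 30 * (((s + 1 : ℕ) : ℝ) + 1) * d + 30 * d =
      1 / 10 - 30 * ((s : ℝ) + 1) * d := by push_cast; ring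
  have hc' : 1 / 10 - 30 * (((s + 1 : ℕ) : ℝ) + 1) * d + 30 * d ≤ 1 / 10 := by
    have : 0 ≤ 30 * ((s : ℝ) + 1) * d := by positivity
    rw [hc]; linarith
  rcases hD with hD | hD | hD
  · obtain ⟨P, hPL, hP⟩ := ihs (t + 1) A B _ hA hB hw' hv' (mass_bound_pred_left hΔ le_rfl hm)
    refine ⟨P, hPL.trans (Nat.mul_le_mul_left 4 (Nat.choose_le_choose _ (by omega))), ?_⟩
    have hloss : ∑ Q, (if D Q then w z Q else 0) * ((∑ x ∈ Q.1, A x) * ∑ y ∈ Q.2, B y) ≤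
        30 * d * ((∑ x, A x) * ∑ y, B y) := by
      refine le_of_mul_le_mul_left ?_ hv0
      calc _ ≤ ∑ Q, w z Q * (30 * d * ((∑ x, A x) * ∑ y, B y)) := by
            rw [Finset.mul_sum]
            refine Finset.sum_le_sum fun Q _ => ?_
            have hwQ := hw.nonneg z Q
            by_cases h : D Q
            · rw [if_pos h]
              linarith [mul_le_mul_of_nonneg_left (hD Q h) hwQ]
            · rw [if_neg h, zero_mul, mul_zero]
              positivity
        _ ≤ _ := by
            rw [← Finset.sum_mul]
            refine mul_le_mul_of_nonneg_right ?_ (by positivity)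
            exact Finset.single_le_sum (f := fun z => ∑ R, w z R)
              (fun z _ => Finset.sum_nonneg fun R _ => hw.nonneg z R) (Finset.mem_univ z)
    have hu := uncovered_dropRects_le hA hB hw z D
    rw [← hc] at hP
    linarith
  · obtain ⟨P₁, hL₁, hP₁⟩ := iht (restrictTo Sᶜ A) B w (restrictTo_nonneg hA) hB hw hv
      (mass_bound_pred_right hm0 hm hv hR0 hlarge (by rw [sum_compl_restrictTo]; linarith))
    obtain ⟨P₂, hL₂, hP₂⟩ := ihs (t + 1) (restrictTo S A) (restrictTo Tᶜ B) _
      (restrictTo_nonneg hA) (restrictTo_nonneg hB) hw' hv'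
      (mass_bound_pred_left hΔ
        (mul_le_mul (sum_mem_restrictTo_le _ _ hA) (sum_mem_restrictTo_le _ _ hB)
          (Finset.sum_nonneg fun y _ => restrictTo_nonneg hB y) ha0) hm)
    refine ⟨.nodeA (fun x => decide (x ∈ S)) P₁
      (.nodeB (fun y => decide (y ∈ T)) P₂ (.leaf (!z))), choose_step hL₁ hL₂, ?_⟩
    have hloss := loss_restrictA_le hA hB hd.le hw ha z S Tᶜ D hD
    rw [← hc] at hP₂
    rw [prodAdv_nodeA, prodAdv_nodeB, prodAdv_restrict_leaf, Bool.not_not,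
      uncovered_splitA f A B S, uncovered_splitB f (restrictTo S A) B T]
    rw [sum_compl_restrictTo] at hP₁ hP₂
    rw [sum_restrictTo] at hP₂
    have key := combine_advantages hd hd' hc' (mul_nonneg hS (sub_nonneg.2 hTb)) hR0.le hΔ hP₁ hP₂
      (uncovered_dropRects_le (restrictTo_nonneg hA) (restrictTo_nonneg hB) hw z D)
      (hloss.trans_eq (by ring))
      (uncovered_nonneg (restrictTo_nonneg (S := S) hA) (restrictTo_nonneg (S := T) hB) hw) hq
    simp only [Protocol.leavesCount, Nat.cast_add, Nat.cast_one] at key ⊢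
    linarith
  · obtain ⟨P₁, hL₁, hP₁⟩ := iht A (restrictTo Tᶜ B) w hA (restrictTo_nonneg hB) hw hv
      (mass_bound_pred_right hm0 hm hv hR0 hlarge (by rw [sum_compl_restrictTo]; linarith))
    obtain ⟨P₂, hL₂, hP₂⟩ := ihs (t + 1) (restrictTo Sᶜ A) (restrictTo T B) _
      (restrictTo_nonneg hA) (restrictTo_nonneg hB) hw' hv'
      (mass_bound_pred_left hΔ
        (mul_le_mul (sum_mem_restrictTo_le _ _ hA) (sum_mem_restrictTo_le _ _ hB)
          (Finset.sum_nonneg fun y _ => restrictTo_nonneg hB y) ha0) hm)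
    refine ⟨.nodeB (fun y => decide (y ∈ T)) P₁
      (.nodeA (fun x => decide (x ∈ S)) P₂ (.leaf (!z))), choose_step hL₁ hL₂, ?_⟩
    have hloss := loss_restrictB_le hA hB hd.le hw hb z Sᶜ T D hD
    rw [← hc] at hP₂
    rw [prodAdv_nodeB, prodAdv_nodeA, prodAdv_restrict_leaf, Bool.not_not,
      uncovered_splitB f A B T, uncovered_splitA f A (restrictTo T B) S]
    rw [sum_compl_restrictTo] at hP₁ hP₂
    rw [sum_restrictTo] at hP₂
    have key := combine_advantages hd hd' hc' (mul_nonneg (sub_nonneg.2 hSa) hT) hR0.le hΔ hP₁ hP₂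
      (uncovered_dropRects_le (restrictTo_nonneg hA) (restrictTo_nonneg hB) hw z D)
      (hloss.trans_eq (by ring))
      (uncovered_nonneg (restrictTo_nonneg (S := S) hA) (restrictTo_nonneg (S := T) hB) hw) hq
    simp only [Protocol.leavesCount, Nat.cast_add, Nat.cast_one] at key ⊢
    linarith

/-! ## From near-optimal solutions of the linear programs to packings -/

/-- Every value above `srecZmu` is attained up to inequality by a feasible solution. -/
theorem exists_feasible_lt {μ : X → Y → ℝ} (hμ : ∀ x y, 0 ≤ μ x y) (f : X → Y → Bool)
    (z : Bool) {ε δ c : ℝ} (hε : 0 ≤ ε) (hδ : 0 ≤ δ) (hc : srecZmu μ f z ε δ < c) :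
    ∃ w : Finset X × Finset Y → ℝ, (∀ R, 0 ≤ w R) ∧
      ((1 - ε) * totalZ μ f z ≤ ∑ x, ∑ y, if f x y = z then μ x y * rcov w x y else 0) ∧
      (∀ x y, f x y ≠ z → rcov w x y ≤ δ) ∧ (∀ x y, rcov w x y ≤ 1) ∧ ∑ R, w R < c := by
  have hne : { v : ℝ | ∃ w : Finset X × Finset Y → ℝ, (∀ R, 0 ≤ w R) ∧
      ((1 - ε) * totalZ μ f z ≤ ∑ x, ∑ y, if f x y = z then μ x y * rcov w x y else 0) ∧
      (∀ x y, f x y ≠ z → rcov w x y ≤ δ) ∧ (∀ x y, rcov w x y ≤ 1) ∧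
      v = ∑ R : Finset X × Finset Y, w R }.Nonempty := by
    let w : Finset X × Finset Y → ℝ := fun R =>
      ∑ x, ∑ y, if R = ({x}, {y}) ∧ f x y = z then 1 else 0
    have hcov : ∀ x y, rcov w x y = if f x y = z then 1 else 0 := by
      intro x y
      calc rcov w x y = ∑ R : Finset X × Finset Y, ∑ x', ∑ y',
            (if R = ({x'}, {y'}) then
              (if x ∈ R.1 ∧ y ∈ R.2 then (if f x' y' = z then (1 : ℝ) else 0) else 0) else 0) := by
            unfold rcov
            refine Finset.sum_congr rfl fun R _ => ?_
            by_cases h : x ∈ R.1 ∧ y ∈ R.2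
            · simp only [h, w, and_self, if_true, ite_and]
            · simp only [h, if_false, ite_self, Finset.sum_const_zero]
        _ = ∑ x', ∑ y', ∑ R : Finset X × Finset Y,
            (if R = ({x'}, {y'}) then
              (if x ∈ R.1 ∧ y ∈ R.2 then (if f x' y' = z then (1 : ℝ) else 0) else 0) else 0) := by
            rw [Finset.sum_comm]
            exact Finset.sum_congr rfl fun x' _ => Finset.sum_comm
        _ = ∑ x', ∑ y', if x = x' ∧ y = y' then (if f x' y' = z then (1 : ℝ) else 0) else 0 := by
            simp
        _ = _ := by simp [ite_and]
    refine ⟨_, w, fun R => ?_, ?_, fun x y h => ?_, fun x y => ?_, rfl⟩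
    · refine Finset.sum_nonneg fun x _ => Finset.sum_nonneg fun y _ => ?_
      split_ifs <;> norm_num
    · rw [totalZ, Finset.mul_sum]
      refine Finset.sum_le_sum fun x _ => ?_
      rw [Finset.mul_sum]
      refine Finset.sum_le_sum fun y _ => ?_
      rw [hcov]
      split_ifs
      · nlinarith [mul_nonneg hε (hμ x y)]
      · simp
    · rw [hcov, if_neg h]; exact hδ
    · rw [hcov]; split_ifs <;> norm_num
  obtain ⟨v, ⟨w, h1, h2, h3, h4, rfl⟩, hlt⟩ := exists_lt_of_csInf_lt hne hc
  exact ⟨w, h1, h2, h3, h4, hlt⟩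

theorem exists_packing {μ : X → Y → ℝ} {μA : X → ℝ} {μB : Y → ℝ}
    (hA : ∀ x, 0 ≤ μA x) (hB : ∀ y, 0 ≤ μB y) (hμ : ∀ x y, μ x y = μA x * μB y)
    (f : X → Y → Bool) {ε δ c : ℝ} (hε : 0 ≤ ε) (hδ : 0 ≤ δ)
    (hc : srecZmu μ f false ε δ + srecZmu μ f true ε δ < c) :
    ∃ w, IsPacking f δ w ∧ coverWeight w ≤ c ∧
      uncovered f μA μB w ≤ ε * totalMass μ := by
  have hμ0 : ∀ x y, 0 ≤ μ x y := fun x y => by rw [hμ]; exact mul_nonneg (hA x) (hB y)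
  set g := (c - (srecZmu μ f false ε δ + srecZmu μ f true ε δ)) / 2 with hg
  have hg0 : 0 < g := by rw [hg]; linarith
  have key := fun z => exists_feasible_lt hμ0 f z hε hδ (lt_add_of_pos_right
    (srecZmu μ f z ε δ) hg0)
  choose w h1 h2 h3 h4 h5 using key
  refine ⟨w, ⟨h1, fun z => h4 z, fun z => h3 z⟩, ?_, ?_⟩
  · rw [coverWeight, Fintype.sum_bool]
    linarith [h5 false, h5 true]
  · have hu : uncovered f μA μB w = totalMass μ -
        ∑ z, ∑ x, ∑ y, (if f x y = z then μ x y * rcov (w z) x y else 0) := by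
      rw [Fintype.sum_bool, totalMass, uncovered]
      simp only [← Finset.sum_add_distrib, ← Finset.sum_sub_distrib]
      refine Finset.sum_congr rfl fun x _ => Finset.sum_congr rfl fun y _ => ?_
      rw [hμ]
      cases f x y <;> simp <;> ring
    have ht : totalMass μ = totalZ μ f true + totalZ μ f false := by
      simp only [totalMass, totalZ, ← Finset.sum_add_distrib]
      refine Finset.sum_congr rfl fun x _ => Finset.sum_congr rfl fun y _ => ?_
      cases f x y <;> simp
    rw [hu, Fintype.sum_bool]
    have e1 := h2 true
    have e2 := h2 false
    rw [ht]
    linarith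

theorem protAdv_eq_prodAdv {μ : X → Y → ℝ} {μA : X → ℝ} {μB : Y → ℝ}
    (hμ : ∀ x y, μ x y = μA x * μB y) (f : X → Y → Bool) (P : Protocol X Y) :
    protAdv μ f P = prodAdv f μA μB P := by
  unfold protAdv prodAdv
  refine Finset.sum_congr rfl fun x _ => Finset.sum_congr rfl fun y _ => ?_
  rw [hμ]
  split_ifs <;> ring

end ProductMeasure

/-- **Lemma 2.6 (inductive protocol construction).** For a product measure
`μ : X × Y → [0,1]` with `|μ| > 0`, `ε, δ ∈ (0,1)`, `Δ ∈ (0,|μ|]`, and nonnegative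
integers `s ≥ ⌈100·log(2(srec^{0,μ}_{ε,δ}(f)+srec^{1,μ}_{ε,δ}(f)))⌉` and
`t ≥ ⌈100·2ˢ·log(|μ|/Δ)⌉`, there is a protocol `Π` with
`L(Π) ≤ 4·C(s+t,t) - 1` and `adv_μ(Π) ≥ (1/10 - ε - 30(s+1)δ^{1/4})|μ| - Δ·L(Π)`. -/
theorem induction_protocol {X Y : Type} [Fintype X] [Fintype Y]
    (f : X → Y → Bool) (μA : X → ℝ) (μB : Y → ℝ)
    (hA : ∀ x, 0 ≤ μA x) (hB : ∀ y, 0 ≤ μB y)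
    (μ : X → Y → ℝ) (hμ : ∀ x y, μ x y = μA x * μB y)
    (hμ1 : ∀ x y, μ x y ≤ 1) (hμpos : 0 < totalMass μ)
    (ε δ : ℝ) (hε : ε ∈ Set.Ioo (0 : ℝ) 1) (hδ : δ ∈ Set.Ioo (0 : ℝ) 1)
    (Δ : ℝ) (hΔ : Δ ∈ Set.Ioc (0 : ℝ) (totalMass μ))
    (s t : ℕ)
    (hs : ⌈(100 : ℝ) * Real.logb 2
        (2 * (srecZmu μ f false ε δ + srecZmu μ f true ε δ))⌉ ≤ (s : ℤ))
    (ht : ⌈(100 : ℝ) * 2 ^ s * Real.logb 2 (totalMass μ / Δ)⌉ ≤ (t : ℤ)) :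
    ∃ P : Protocol X Y,
      P.leavesCount ≤ 4 * Nat.choose (s + t) t - 1 ∧
      (1 / 10 - ε - 30 * ((s : ℝ) + 1) * δ ^ ((1 : ℝ) / 4)) * totalMass μ -
          Δ * (P.leavesCount : ℝ) ≤ protAdv μ f P := by
  have hm : totalMass μ = (∑ x, μA x) * ∑ y, μB y := by
    simp only [totalMass, hμ, Finset.sum_mul_sum]
  obtain ⟨hε0, -⟩ := hε
  obtain ⟨hδ0, -⟩ := hδ
  obtain ⟨hΔ0, -⟩ := hΔ
  set d : ℝ := δ ^ ((1 : ℝ) / 4) with hd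
  have hd0 : 0 < d := Real.rpow_pos_of_pos hδ0 _
  have hd4 : d ^ 4 = δ := by
    rw [hd, ← Real.rpow_natCast, ← Real.rpow_mul hδ0.le]
    norm_num
  simp only [protAdv_eq_prodAdv hμ]
  by_cases hd' : d ≤ 1 / 300
  · have hs' : srecZmu μ f false ε δ + srecZmu μ f true ε δ <
        3 / 4 * (2 : ℝ) ^ ((s : ℝ) / 100) := by
      have h2 : (0 : ℝ) < 2 ^ ((s : ℝ) / 100) := Real.rpow_pos_of_pos two_pos _
      by_cases hv : 0 < 2 * (srecZmu μ f false ε δ + srecZmu μ f true ε δ)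
      · have h3 := Int.ceil_le.1 hs
        rw [Int.cast_natCast] at h3
        have h4 := (Real.logb_le_iff_le_rpow one_lt_two hv).1
          (show _ ≤ (s : ℝ) / 100 by linarith)
        linarith
      · linarith
    obtain ⟨w, hw, hwc, hwu⟩ := exists_packing hA hB hμ f hε0.le hδ0.le hs'
    have ht' : totalMass μ ≤ Δ * (2 : ℝ) ^ ((t : ℝ) / (100 * 2 ^ s)) := by
      have h3 := Int.ceil_le.1 ht
      rw [Int.cast_natCast] at h3
      have h4 := (Real.logb_le_iff_le_rpow one_lt_two (div_pos hμpos hΔ0)).1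
        ((le_div_iff₀' (show (0 : ℝ) < 100 * 2 ^ s by positivity)).2 h3)
      rwa [div_le_iff₀' hΔ0] at h4
    rw [hm] at ht'
    rw [← hd4] at hw
    obtain ⟨P, hPL, hP⟩ := exists_protocol_of_packing f hd0 hd' hΔ0 s t μA μB w hA hB hw
      (by linarith) ht'
    refine ⟨P, by omega, ?_⟩
    rw [hm] at hwu ⊢
    linarith
  · obtain ⟨z, hz⟩ := exists_leaf_prodAdv_nonneg f μA μB
    refine ⟨.leaf z, ?_, ?_⟩
    · have := Nat.choose_pos (Nat.le_add_left t s)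
      simp only [Protocol.leavesCount]
      omega
    · have h1 : 0 ≤ (s : ℝ) * d := by positivity
      have h2 : 1 / 10 - ε - 30 * ((s : ℝ) + 1) * d ≤ 0 := by linarith
      have h3 := mul_nonpos_of_nonpos_of_nonneg h2 hμpos.le
      simp only [Protocol.leavesCount, Nat.cast_one, mul_one]
      linarith
end

section
/- There is a universal constant C > 0 such that for every f : {0,1}^n × {0,1}^n → {0,1} and every δ ∈ (0, 1/8): IC_δ(f) ≤ C · log(1/δ) · IC_{1/8}(f). -/
open scoped BigOperators
open scoped Classical

/-! ## Conditional entropy -/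

/-- Conditional entropy `H(A | C)` (in bits) of random variables on a finite space `(Ω, p)`. -/
noncomputable def condEnt {Ω α γ : Type} [Fintype Ω] (p : Ω → ℝ) (A : Ω → α) (C : Ω → γ) : ℝ :=
  ∑ ω, p ω * Real.logb 2 (prOf p (fun ω' => C ω' = C ω) /
    prOf p (fun ω' => A ω' = A ω ∧ C ω' = C ω))

section Entropy

variable {Ω α β γ : Type} [Fintype Ω] {p : Ω → ℝ}

theorem prOf_mono (hp : ∀ ω, 0 ≤ p ω) {q r : Ω → Prop} (h : ∀ ω, q ω → r ω) :
    prOf p q ≤ prOf p r := by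
  refine Finset.sum_le_sum fun ω _ => ?_
  by_cases hq : q ω
  · simp [hq, h ω hq]
  · by_cases hr : r ω <;> simp [hq, hr, hp ω]

theorem prOf_nonneg (hp : ∀ ω, 0 ≤ p ω) (q : Ω → Prop) : 0 ≤ prOf p q :=
  Finset.sum_nonneg fun ω _ => by split_ifs <;> simp [hp ω]

theorem le_prOf (hp : ∀ ω, 0 ≤ p ω) {q : Ω → Prop} {ω : Ω} (h : q ω) : p ω ≤ prOf p q := by
  have := Finset.single_le_sum (f := fun ω => if q ω then p ω else 0)
    (fun i _ => by split_ifs <;> simp [hp i]) (Finset.mem_univ ω)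
  simpa [h, prOf] using this

theorem condEnt_nonneg (hp : ∀ ω, 0 ≤ p ω) (A : Ω → α) (C : Ω → γ) : 0 ≤ condEnt p A C := by
  refine Finset.sum_nonneg fun ω _ => ?_
  rcases (hp ω).eq_or_lt with h | h
  · simp [← h]
  · refine mul_nonneg (hp ω) (Real.logb_nonneg (by norm_num) ?_)
    rw [one_le_div (h.trans_le (le_prOf hp ⟨rfl, rfl⟩))]
    exact prOf_mono hp fun _ h => h.2

/-- A function of `A` has smaller conditional entropy than `A`. -/
theorem condEnt_comp_le (hp : ∀ ω, 0 ≤ p ω) (A : Ω → α) (C : Ω → γ) (F : α → β) :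
    condEnt p (fun ω => F (A ω)) C ≤ condEnt p A C := by
  refine Finset.sum_le_sum fun ω _ => ?_
  rcases (hp ω).eq_or_lt with h | h
  · simp [← h]
  · have h1 : 0 < prOf p (fun ω' => A ω' = A ω ∧ C ω' = C ω) :=
      h.trans_le (le_prOf hp ⟨rfl, rfl⟩)
    have h2 : prOf p (fun ω' => A ω' = A ω ∧ C ω' = C ω) ≤
        prOf p (fun ω' => F (A ω') = F (A ω) ∧ C ω' = C ω) :=
      prOf_mono hp fun _ h => ⟨congrArg F h.1, h.2⟩
    have h3 : 0 < prOf p (fun ω' => C ω' = C ω) := h.trans_le (le_prOf hp rfl)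
    refine mul_le_mul_of_nonneg_left ?_ (hp ω)
    exact Real.logb_le_logb_of_le (by norm_num) (div_pos h3 (h1.trans_le h2))
      (div_le_div_of_nonneg_left h3.le h1 h2)

/-- The total weight of the relative likelihoods of a conditional subprobability `Q`. -/
theorem sum_likelihood_le (hp : ∀ ω, 0 ≤ p ω) (A : Ω → α) (C : Ω → γ) (Q : α → γ → ℝ)
    (hQ0 : ∀ a c, 0 ≤ Q a c) (hQ : ∀ c, ∑ a ∈ Finset.univ.image A, Q a c ≤ 1) :
    ∑ ω, p ω * (prOf p (fun ω' => C ω' = C ω) * Q (A ω) (C ω) /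
      prOf p (fun ω' => A ω' = A ω ∧ C ω' = C ω)) ≤ ∑ ω, p ω := by
  have key : ∀ a c, ∑ ω, (if A ω = a ∧ C ω = c then
      p ω / prOf p (fun ω' => A ω' = A ω ∧ C ω' = C ω) else 0) ≤ 1 := by
    intro a c
    have : ∀ ω, (if A ω = a ∧ C ω = c then
        p ω / prOf p (fun ω' => A ω' = A ω ∧ C ω' = C ω) else 0) =
        (if A ω = a ∧ C ω = c then p ω else 0) / prOf p (fun ω' => A ω' = a ∧ C ω' = c) := by
      intro ω
      split_ifs with h
      · rw [h.1, h.2]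
      · simp
    rw [Finset.sum_congr rfl fun ω _ => this ω, ← Finset.sum_div]
    refine div_le_one_of_le₀ (le_of_eq ?_) (prOf_nonneg hp _)
    unfold prOf
    congr!
  calc
    _ = ∑ ω', p ω' * ∑ a ∈ Finset.univ.image A, Q a (C ω') * ∑ ω,
          (if A ω = a ∧ C ω = C ω' then
            p ω / prOf p (fun ω' => A ω' = A ω ∧ C ω' = C ω) else 0) := by
      have h1 : ∀ ω', ∑ a ∈ Finset.univ.image A, Q a (C ω') * ∑ ω,
          (if A ω = a ∧ C ω = C ω' then
            p ω / prOf p (fun ω' => A ω' = A ω ∧ C ω' = C ω) else 0) =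
          ∑ ω, if C ω' = C ω then Q (A ω) (C ω) *
            (p ω / prOf p (fun ω' => A ω' = A ω ∧ C ω' = C ω)) else 0 := by
        intro ω'
        simp only [Finset.mul_sum]
        rw [Finset.sum_comm]
        refine Finset.sum_congr rfl fun ω _ => ?_
        rw [Finset.sum_eq_single (A ω)]
        · by_cases h : C ω' = C ω <;> simp [h, eq_comm]
        · intro b _ hb
          simp [Ne.symm hb]
        · intro h
          exact absurd (Finset.mem_image_of_mem A (Finset.mem_univ ω)) h
      simp_rw [h1]
      simp only [Finset.mul_sum]
      rw [Finset.sum_comm]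
      refine Finset.sum_congr rfl fun ω _ => ?_
      conv_lhs => rw [prOf]
      rw [Finset.sum_mul, Finset.sum_div, Finset.mul_sum]
      refine Finset.sum_congr rfl fun ω' _ => ?_
      split_ifs <;> ring
    _ ≤ ∑ ω', p ω' * 1 := by
      refine Finset.sum_le_sum fun ω' _ => mul_le_mul_of_nonneg_left ?_ (hp ω')
      refine (Finset.sum_le_sum fun a _ => ?_).trans (hQ (C ω'))
      exact mul_le_of_le_one_right (hQ0 _ _) (key a _)
    _ = _ := by simp

/-- Gibbs' inequality: the conditional entropy is at most the cross entropy with respect to any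
conditional subprobability `Q`. -/
theorem condEnt_le_crossEnt (hp : ∀ ω, 0 ≤ p ω) (A : Ω → α) (C : Ω → γ) (Q : α → γ → ℝ)
    (hQ0 : ∀ a c, 0 ≤ Q a c) (hQ : ∀ c, ∑ a ∈ Finset.univ.image A, Q a c ≤ 1)
    (hpos : ∀ ω, 0 < p ω → 0 < Q (A ω) (C ω)) :
    condEnt p A C ≤ ∑ ω, p ω * -Real.logb 2 (Q (A ω) (C ω)) := by
  have hlog : (0 : ℝ) < Real.log 2 := Real.log_pos (by norm_num)
  rw [← sub_nonpos, condEnt, ← Finset.sum_sub_distrib]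
  have hterm : ∀ ω, p ω * Real.logb 2 (prOf p (fun ω' => C ω' = C ω) /
      prOf p (fun ω' => A ω' = A ω ∧ C ω' = C ω)) - p ω * -Real.logb 2 (Q (A ω) (C ω)) ≤
      (p ω * (prOf p (fun ω' => C ω' = C ω) * Q (A ω) (C ω) /
        prOf p (fun ω' => A ω' = A ω ∧ C ω' = C ω)) - p ω) / Real.log 2 := by
    intro ω
    rcases (hp ω).eq_or_lt with h | h
    · simp [← h]
    · have h1 : 0 < prOf p (fun ω' => A ω' = A ω ∧ C ω' = C ω) :=
        h.trans_le (le_prOf hp ⟨rfl, rfl⟩)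
      have h3 : 0 < prOf p (fun ω' => C ω' = C ω) := h.trans_le (le_prOf hp rfl)
      have hq := hpos ω h
      have e : p ω * Real.logb 2 (prOf p (fun ω' => C ω' = C ω) /
          prOf p (fun ω' => A ω' = A ω ∧ C ω' = C ω)) - p ω * -Real.logb 2 (Q (A ω) (C ω)) =
          p ω * Real.log (prOf p (fun ω' => C ω' = C ω) * Q (A ω) (C ω) /
        prOf p (fun ω' => A ω' = A ω ∧ C ω' = C ω)) / Real.log 2 := by
        rw [mul_div_right_comm (prOf p _), Real.log_mul (div_pos h3 h1).ne' hq.ne', Real.logb, Real.logb]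
        ring
      rw [e]
      refine div_le_div_of_nonneg_right ?_ hlog.le
      have := Real.log_le_sub_one_of_pos (div_pos (mul_pos h3 hq) h1)
      nlinarith
  refine (Finset.sum_le_sum fun ω _ => hterm ω).trans ?_
  rw [← Finset.sum_div, Finset.sum_sub_distrib]
  exact div_nonpos_of_nonpos_of_nonneg
    (sub_nonpos.2 (sum_likelihood_le hp A C Q hQ0 hQ)) hlog.le

theorem sum_cond_le_one (hp : ∀ ω, 0 ≤ p ω) (A : Ω → α) (C : Ω → γ) (S : Finset α) (c : γ) :
    ∑ a ∈ S, prOf p (fun ω => A ω = a ∧ C ω = c) / prOf p (fun ω => C ω = c) ≤ 1 := by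
  rw [← Finset.sum_div]
  refine div_le_one_of_le₀ ?_ (prOf_nonneg hp _)
  simp only [prOf]
  rw [Finset.sum_comm]
  refine Finset.sum_le_sum fun ω _ => ?_
  by_cases h : C ω = c
  · simp only [h, and_true, if_true, Finset.sum_ite_eq]
    split_ifs <;> simp [hp ω]
  · simp [h]

theorem condEnt_pair_le (hp : ∀ ω, 0 ≤ p ω) (A : Ω → α) (B : Ω → β) (C : Ω → γ) :
    condEnt p (fun ω => (A ω, B ω)) C ≤ condEnt p A C + condEnt p B C := by
  have hdiv : ∀ {δ : Type} (D : Ω → δ) (a : δ) (c : γ),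
      0 ≤ prOf p (fun ω => D ω = a ∧ C ω = c) / prOf p (fun ω => C ω = c) :=
    fun D a c => div_nonneg (prOf_nonneg hp _) (prOf_nonneg hp _)
  have hpos : ∀ {δ : Type} (D : Ω → δ) (ω : Ω), 0 < p ω →
      0 < prOf p (fun ω' => D ω' = D ω ∧ C ω' = C ω) / prOf p (fun ω' => C ω' = C ω) :=
    fun D ω h => div_pos (h.trans_le (le_prOf hp ⟨rfl, rfl⟩)) (h.trans_le (le_prOf hp rfl))
  refine (condEnt_le_crossEnt hp _ C (fun a c =>
    prOf p (fun ω => A ω = a.1 ∧ C ω = c) / prOf p (fun ω => C ω = c) *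
    (prOf p (fun ω => B ω = a.2 ∧ C ω = c) / prOf p (fun ω => C ω = c))) ?_ ?_ ?_).trans_eq ?_
  · exact fun a c => mul_nonneg (hdiv A _ _) (hdiv B _ _)
  · intro c
    calc
      _ ≤ ∑ a ∈ Finset.univ.image A ×ˢ Finset.univ.image B,
          prOf p (fun ω => A ω = a.1 ∧ C ω = c) / prOf p (fun ω => C ω = c) *
          (prOf p (fun ω => B ω = a.2 ∧ C ω = c) / prOf p (fun ω => C ω = c)) := by
        refine Finset.sum_le_sum_of_subset_of_nonneg ?_
          fun a _ _ => mul_nonneg (hdiv A _ _) (hdiv B _ _)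
        intro a ha
        obtain ⟨ω, rfl⟩ : ∃ ω, (A ω, B ω) = a := by simpa using ha
        simp
      _ ≤ 1 := by
        rw [Finset.sum_product]
        simp only [← Finset.mul_sum]
        refine (Finset.sum_le_sum fun a _ => ?_).trans (sum_cond_le_one hp A C _ c)
        exact mul_le_of_le_one_right (hdiv A _ _) (sum_cond_le_one hp B C _ c)
  · exact fun ω h => mul_pos (hpos A ω h) (hpos B ω h)
  · rw [condEnt, condEnt, ← Finset.sum_add_distrib]
    refine Finset.sum_congr rfl fun ω _ => ?_
    rcases (hp ω).eq_or_lt with h | h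
    · simp [← h]
    · rw [Real.logb_mul (hpos A ω h).ne' (hpos B ω h).ne', ← inv_div (prOf p fun ω' => C ω' = C ω),
        ← inv_div (prOf p fun ω' => C ω' = C ω), Real.logb_inv, Real.logb_inv]
      ring

/-- Conditional entropy is bounded uniformly in the underlying distribution. -/
theorem exists_forall_condEnt_le (A : Ω → α) (C : Ω → γ) :
    ∃ K : ℝ, ∀ p : Ω → ℝ, IsDist p → condEnt p A C ≤ K := by
  refine ⟨Real.logb 2 (Finset.univ.image A).card, fun p hp => ?_⟩
  have hne : (0 : ℝ) < (Finset.univ.image A).card := by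
    have : (Finset.univ.image A).Nonempty := by
      rw [Finset.image_nonempty]
      by_contra h
      rw [Finset.not_nonempty_iff_eq_empty] at h
      simpa [h] using hp.2
    exact_mod_cast this.card_pos
  refine (condEnt_le_crossEnt hp.1 A C (fun _ _ => ((Finset.univ.image A).card : ℝ)⁻¹)
    (fun _ _ => (inv_pos.2 hne).le) (fun _ => ?_) (fun _ _ => inv_pos.2 hne)).trans_eq ?_
  · rw [Finset.sum_const, nsmul_eq_mul, mul_inv_cancel₀ hne.ne']
  · rw [← Finset.sum_mul, hp.2, Real.logb_inv]
    ring

/-- A quantitative form of the concavity of conditional entropy. -/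
theorem condEnt_le_two_mul_mix {q : Ω → ℝ} (hp : ∀ ω, 0 ≤ p ω) (hq : ∀ ω, 0 ≤ q ω)
    (A : Ω → α) (C : Ω → γ) :
    condEnt p A C ≤ 2 * condEnt (fun ω => (p ω + q ω) / 2) A C := by
  set s : Ω → ℝ := fun ω => (p ω + q ω) / 2 with hs
  have hs0 : ∀ ω, 0 ≤ s ω := fun ω => by have := hp ω; have := hq ω; simp only [hs]; linarith
  have hps : ∀ ω, 0 < p ω → 0 < s ω := fun ω h => by have := hq ω; simp only [hs]; linarith
  refine (condEnt_le_crossEnt hp A C (fun a c =>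
    prOf s (fun ω => A ω = a ∧ C ω = c) / prOf s (fun ω => C ω = c)) ?_ ?_ ?_).trans ?_
  · exact fun a c => div_nonneg (prOf_nonneg hs0 _) (prOf_nonneg hs0 _)
  · exact fun c => sum_cond_le_one hs0 A C _ c
  · exact fun ω h => div_pos ((hps ω h).trans_le (le_prOf hs0 ⟨rfl, rfl⟩))
      ((hps ω h).trans_le (le_prOf hs0 rfl))
  · rw [condEnt, Finset.mul_sum]
    refine Finset.sum_le_sum fun ω _ => ?_
    rw [← Real.logb_inv, inv_div, ← mul_assoc]
    rcases (hs0 ω).eq_or_lt with h | h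
    · have h0 : p ω = 0 := by
        have := hp ω; have := hq ω; simp only [hs] at h; linarith
      simp [← h, h0]
    refine mul_le_mul_of_nonneg_right ?_ (Real.logb_nonneg (by norm_num) ?_)
    · have := hq ω; simp only [hs]; linarith
    · rw [one_le_div (h.trans_le (le_prOf hs0 ⟨rfl, rfl⟩))]
      exact prOf_mono hs0 fun _ h => h.2

end Entropy

/-! ## Computing a function exactly -/

/-- The protocol in which Alice compares her input with the elements of a list one by one, and Bob
announces the value of `f` at the first match. -/
noncomputable def exactProtocol {X Y : Type} (f : X → Y → Bool) : List X → Protocol X Y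
  | [] => .leaf false
  | a :: l => .nodeA (fun x => decide (x = a)) (exactProtocol f l)
      (.nodeB (f a) (.leaf false) (.leaf true))

theorem eval_exactProtocol {X Y : Type} (f : X → Y → Bool) (l : List X) (x : X) (y : Y) (hx : x ∈ l) :
    (exactProtocol f l).eval x y = f x y := by
  induction l with
  | nil => simp at hx
  | cons a l ih =>
    by_cases h : x = a
    · subst h
      cases hf : f x y <;> simp [exactProtocol, Protocol.eval, hf]
    · simp [exactProtocol, Protocol.eval, h, ih ((List.mem_cons.1 hx).resolve_left h)]

/-! ## Information cost as an average over the public randomness -/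

/-- The weight function on `X × Y` of a distribution in curried form. -/
def uncurried {X Y : Type} (μ : X → Y → ℝ) : X × Y → ℝ := fun ω => μ ω.1 ω.2

/-- Information cost `H(T | Y) + H(T | X)` of a deterministic protocol. -/
noncomputable def protCost {X Y : Type} [Fintype X] [Fintype Y] (μ : X → Y → ℝ)
    (P : Protocol X Y) : ℝ :=
  condEnt (uncurried μ) (fun ω => P.transcript ω.1 ω.2) Prod.snd +
  condEnt (uncurried μ) (fun ω => P.transcript ω.1 ω.2) Prod.fst

/-- Error indicator of a deterministic protocol at a point. -/
noncomputable def ptErr {X Y : Type} (f : X → Y → Bool) (P : Protocol X Y) (ω : X × Y) : ℝ :=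
  if P.eval ω.1 ω.2 ≠ f ω.1 ω.2 then 1 else 0

section Cost

variable {X Y : Type} [Fintype X] [Fintype Y] {μ : X → Y → ℝ} {m : ℕ} {ρ : Fin m → ℝ}

theorem IsDist2.isDist (hμ : IsDist2 μ) : IsDist (uncurried μ) :=
  ⟨fun ω => hμ.1 _ _, by rw [Fintype.sum_prod_type]; exact hμ.2⟩

theorem prOf_prod_coin_eq (q : X × Y → Prop) (r : Fin m) :
    prOf (fun ω : X × Y × Fin m => μ ω.1 ω.2.1 * ρ ω.2.2)
      (fun ω => ω.2.2 = r ∧ q (ω.1, ω.2.1)) = ρ r * prOf (uncurried μ) q := by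
  simp only [prOf, Fintype.sum_prod_type, Finset.mul_sum, uncurried]
  refine Finset.sum_congr rfl fun x _ => Finset.sum_congr rfl fun y _ => ?_
  rw [Finset.sum_eq_single r]
  · by_cases h : q (x, y) <;> simp [h, mul_comm]
  · intro b _ hb
    simp [hb]
  · simp

theorem prOf_prod (hρ : IsDist ρ) (q : X × Y → Prop) :
    prOf (fun ω : X × Y × Fin m => μ ω.1 ω.2.1 * ρ ω.2.2) (fun ω => q (ω.1, ω.2.1)) =
      prOf (uncurried μ) q := by
  simp only [prOf, Fintype.sum_prod_type, uncurried]
  refine Finset.sum_congr rfl fun x _ => Finset.sum_congr rfl fun y _ => ?_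
  by_cases h : q (x, y)
  · simp [h, ← Finset.mul_sum, hρ.2]
  · simp [h]

theorem prOf_singleton (ω : X × Y) : prOf (uncurried μ) (fun ω' => ω' = ω) = μ ω.1 ω.2 := by
  rw [prOf, Finset.sum_eq_single ω] <;> simp +contextual [uncurried]

/-- Mutual information with the transcript, conditioned on the other input, is the average over
the public randomness of the conditional entropy of the communicated bits. -/
theorem condMI_eq_sum_condEnt {α γ τ : Type} (hμ : IsDist2 μ) (hρ : IsDist ρ)
    (A : X × Y → α) (C : X × Y → γ) (hAC : ∀ ω ω', A ω = A ω' → C ω = C ω' → ω = ω')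
    (T : Fin m → X × Y → τ) :
    condMI (fun ω : X × Y × Fin m => μ ω.1 ω.2.1 * ρ ω.2.2)
      (fun ω => A (ω.1, ω.2.1)) (fun ω => (ω.2.2, T ω.2.2 (ω.1, ω.2.1)))
      (fun ω => C (ω.1, ω.2.1)) = ∑ r, ρ r * condEnt (uncurried μ) (T r) C := by
  have hiff : ∀ ω ω', (A ω = A ω' ∧ C ω = C ω') ↔ ω = ω' :=
    fun ω ω' => ⟨fun h => hAC _ _ h.1 h.2, fun h => by simp [h]⟩
  have e : ∀ x y r, μ x y * ρ r * Real.logb 2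
      ((prOf (fun ω : X × Y × Fin m => μ ω.1 ω.2.1 * ρ ω.2.2)
        (fun ω => A (ω.1, ω.2.1) = A (x, y) ∧
          (ω.2.2, T ω.2.2 (ω.1, ω.2.1)) = (r, T r (x, y)) ∧ C (ω.1, ω.2.1) = C (x, y)) *
        prOf (fun ω : X × Y × Fin m => μ ω.1 ω.2.1 * ρ ω.2.2)
          (fun ω => C (ω.1, ω.2.1) = C (x, y))) /
       (prOf (fun ω : X × Y × Fin m => μ ω.1 ω.2.1 * ρ ω.2.2)
          (fun ω => A (ω.1, ω.2.1) = A (x, y) ∧ C (ω.1, ω.2.1) = C (x, y)) *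
        prOf (fun ω : X × Y × Fin m => μ ω.1 ω.2.1 * ρ ω.2.2)
          (fun ω => (ω.2.2, T ω.2.2 (ω.1, ω.2.1)) = (r, T r (x, y)) ∧
            C (ω.1, ω.2.1) = C (x, y)))) =
      ρ r * (uncurried μ (x, y) * Real.logb 2
        (prOf (uncurried μ) (fun ω' => C ω' = C (x, y)) /
         prOf (uncurried μ) (fun ω' => T r ω' = T r (x, y) ∧ C ω' = C (x, y)))) := by
    intro x y r
    have h1 : (fun ω : X × Y × Fin m => A (ω.1, ω.2.1) = A (x, y) ∧
        (ω.2.2, T ω.2.2 (ω.1, ω.2.1)) = (r, T r (x, y)) ∧ C (ω.1, ω.2.1) = C (x, y)) =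
        fun ω => ω.2.2 = r ∧ (ω.1, ω.2.1) = (x, y) := by
      funext ω
      rw [← hiff (ω.1, ω.2.1), Prod.mk.injEq]
      refine propext ⟨fun h => ⟨h.2.1.1, h.1, h.2.2⟩, fun h => ⟨h.2.1, ⟨h.1, ?_⟩, h.2.2⟩⟩
      rw [h.1, hAC _ _ h.2.1 h.2.2]
    have h2 : (fun ω : X × Y × Fin m => (ω.2.2, T ω.2.2 (ω.1, ω.2.1)) = (r, T r (x, y)) ∧
        C (ω.1, ω.2.1) = C (x, y)) = fun ω => ω.2.2 = r ∧
          (T r (ω.1, ω.2.1) = T r (x, y) ∧ C (ω.1, ω.2.1) = C (x, y)) := by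
      funext ω
      rw [Prod.mk.injEq, and_assoc]
      exact propext (and_congr_right fun h => by rw [h])
    rw [h1, h2, prOf_prod_coin_eq (fun ω => ω = (x, y)),
      prOf_prod_coin_eq (fun ω => T r ω = T r (x, y) ∧ C ω = C (x, y)),
      prOf_prod hρ (fun ω => C ω = C (x, y))]
    simp only [hiff]
    rw [prOf_prod hρ (fun ω => ω = (x, y)), prOf_singleton]
    change _ = ρ r * (μ x y * _)
    rcases (hμ.1 x y).eq_or_lt with h | h
    · simp [← h]
    rcases (hρ.1 r).eq_or_lt with h' | h'
    · simp [← h']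
    dsimp only
    rw [mul_comm (ρ r) (μ x y), mul_assoc (μ x y) (ρ r) (prOf _ _), mul_div_mul_left _ _ h.ne',
      mul_div_mul_left _ _ h'.ne', mul_comm (μ x y), mul_assoc]
  unfold condMI
  simp only [Fintype.sum_prod_type]
  simp only [e]
  simp only [condEnt, Fintype.sum_prod_type, Finset.mul_sum]
  symm
  rw [Finset.sum_comm]
  exact Finset.sum_congr rfl fun x _ => Finset.sum_comm

theorem infoCost_eq (hμ : IsDist2 μ) (hρ : IsDist ρ) (P : Fin m → Protocol X Y) :
    infoCost μ ρ P = ∑ r, ρ r * protCost μ (P r) := by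
  unfold infoCost protCost
  simp only [mul_add, Finset.sum_add_distrib]
  congr 1
  · exact condMI_eq_sum_condEnt hμ hρ Prod.fst Prod.snd (fun _ _ => Prod.ext)
      (fun r ω => (P r).transcript ω.1 ω.2)
  · exact condMI_eq_sum_condEnt hμ hρ Prod.snd Prod.fst (fun _ _ h h' => Prod.ext h' h)
      (fun r ω => (P r).transcript ω.1 ω.2)

theorem randErr_eq (μ : X → Y → ℝ) (f : X → Y → Bool) (ρ : Fin m → ℝ)
    (P : Fin m → Protocol X Y) :
    randErr μ f ρ P = ∑ ω, uncurried μ ω * ∑ r, ρ r * ptErr f (P r) ω := by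
  simp only [randErr, Fintype.sum_prod_type, Finset.mul_sum, uncurried, ptErr]
  refine Finset.sum_congr rfl fun x _ => Finset.sum_congr rfl fun y _ =>
    Finset.sum_congr rfl fun r _ => ?_
  split_ifs <;> simp

theorem protCost_nonneg (hμ : IsDist2 μ) (P : Protocol X Y) : 0 ≤ protCost μ P :=
  add_nonneg (condEnt_nonneg hμ.isDist.1 _ _) (condEnt_nonneg hμ.isDist.1 _ _)

theorem infoCost_nonneg (hμ : IsDist2 μ) (hρ : IsDist ρ) (P : Fin m → Protocol X Y) :
    0 ≤ infoCost μ ρ P := by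
  rw [infoCost_eq hμ hρ]
  exact Finset.sum_nonneg fun r _ => mul_nonneg (hρ.1 r) (protCost_nonneg hμ _)

theorem ICmu_nonneg (hμ : IsDist2 μ) (f : X → Y → Bool) (ε : ℝ) : 0 ≤ ICmu μ f ε := by
  refine Real.sInf_nonneg ?_
  rintro c ⟨m, ρ, P, hρ, -, rfl⟩
  exact infoCost_nonneg hμ hρ P

theorem ICmu_le (hμ : IsDist2 μ) (f : X → Y → Bool) {ε : ℝ} (hρ : IsDist ρ)
    (P : Fin m → Protocol X Y) (h : randErr μ f ρ P ≤ ε) : ICmu μ f ε ≤ infoCost μ ρ P := by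
  refine csInf_le ⟨0, ?_⟩ ⟨m, ρ, P, hρ, h, rfl⟩
  rintro c ⟨m, ρ, P, hρ, -, rfl⟩
  exact infoCost_nonneg hμ hρ P

theorem exists_zero_err (f : X → Y → Bool) :
    ∃ P : Protocol X Y, ∀ μ, randErr μ f (fun _ : Fin 1 => 1) (fun _ => P) = 0 :=
  ⟨exactProtocol f Finset.univ.toList, fun μ => by
    simp [randErr, eval_exactProtocol f _ _ _ (Finset.mem_toList.2 (Finset.mem_univ _))]⟩

theorem isDist_one : IsDist (fun _ : Fin 1 => (1 : ℝ)) := ⟨fun _ => zero_le_one, by simp⟩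

theorem exists_infoCost_lt (f : X → Y → Bool) {ε c : ℝ} (hε : 0 ≤ ε)
    (hc : ICmu μ f ε < c) : ∃ (m : ℕ) (ρ : Fin m → ℝ) (P : Fin m → Protocol X Y),
      IsDist ρ ∧ randErr μ f ρ P ≤ ε ∧ infoCost μ ρ P < c := by
  obtain ⟨P, hP⟩ := exists_zero_err f
  have hne : {c : ℝ | ∃ (m : ℕ) (ρ : Fin m → ℝ) (P : Fin m → Protocol X Y),
      IsDist ρ ∧ randErr μ f ρ P ≤ ε ∧ c = infoCost μ ρ P}.Nonempty :=
    ⟨_, 1, _, fun _ => P, isDist_one, (hP μ).trans_le hε, rfl⟩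
  obtain ⟨_, ⟨m, ρ, P, hρ, he, rfl⟩, h⟩ := exists_lt_of_csInf_lt hne hc
  exact ⟨m, ρ, P, hρ, he, h⟩

theorem ICmu_le_IC (hμ : IsDist2 μ) (f : X → Y → Bool) {ε : ℝ} (hε : 0 ≤ ε) :
    ICmu μ f ε ≤ IC f ε := by
  obtain ⟨P, hP⟩ := exists_zero_err f
  obtain ⟨K, hK⟩ := exists_forall_condEnt_le (fun ω : X × Y => P.transcript ω.1 ω.2) Prod.snd
  obtain ⟨L, hL⟩ := exists_forall_condEnt_le (fun ω : X × Y => P.transcript ω.1 ω.2) Prod.fst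
  refine le_csSup ⟨K + L, ?_⟩ ⟨μ, hμ, rfl⟩
  rintro c ⟨ν, hν, rfl⟩
  refine (ICmu_le hν f isDist_one (fun _ => P) ((hP ν).trans_le hε)).trans ?_
  rw [infoCost_eq hν isDist_one]
  simpa [protCost] using add_le_add (hK _ hν.isDist) (hL _ hν.isDist)

theorem IC_nonneg (f : X → Y → Bool) (ε : ℝ) : 0 ≤ IC f ε := by
  refine Real.sSup_nonneg ?_
  rintro c ⟨μ, hμ, rfl⟩
  exact ICmu_nonneg hμ f ε

end Cost

/-! ## Sequential composition -/

namespace Protocol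

variable {X Y : Type}

/-- Run a protocol, and then a second one that may depend on the output of the first. -/
def bind : Protocol X Y → (Bool → Protocol X Y) → Protocol X Y
  | leaf b, q => q b
  | nodeA g t0 t1, q => nodeA g (bind t0 q) (bind t1 q)
  | nodeB g t0 t1, q => nodeB g (bind t0 q) (bind t1 q)

theorem eval_bind (P : Protocol X Y) (q : Bool → Protocol X Y) (x : X) (y : Y) :
    (P.bind q).eval x y = (q (P.eval x y)).eval x y := by
  induction P with
  | leaf b => rfl
  | nodeA g t0 t1 h0 h1 => by_cases h : g x <;> simp [bind, eval, h, h0, h1]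
  | nodeB g t0 t1 h0 h1 => by_cases h : g y <;> simp [bind, eval, h, h0, h1]

theorem transcript_bind (P : Protocol X Y) (q : Bool → Protocol X Y) (x : X) (y : Y) :
    (P.bind q).transcript x y = P.transcript x y ++ (q (P.eval x y)).transcript x y := by
  induction P with
  | leaf b => rfl
  | nodeA g t0 t1 h0 h1 => by_cases h : g x <;> simp [bind, eval, transcript, h, h0, h1]
  | nodeB g t0 t1 h0 h1 => by_cases h : g y <;> simp [bind, eval, transcript, h, h0, h1]

/-- Run a list of protocols one after the other and apply `g` to the list of their outputs. -/
def runAll : List (Protocol X Y) → (List Bool → Bool) → Protocol X Y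
  | [], g => leaf (g [])
  | P :: l, g => P.bind fun b => runAll l fun o => g (b :: o)

theorem eval_runAll (l : List (Protocol X Y)) (g : List Bool → Bool) (x : X) (y : Y) :
    (runAll l g).eval x y = g (l.map fun P => P.eval x y) := by
  induction l generalizing g with
  | nil => rfl
  | cons P l ih => simp [runAll, eval_bind, ih]

theorem transcript_runAll (l : List (Protocol X Y)) (g : List Bool → Bool) (x : X) (y : Y) :
    (runAll l g).transcript x y = (l.map fun P => P.transcript x y).flatten := by
  induction l generalizing g with
  | nil => rfl
  | cons P l ih => simp [runAll, transcript_bind, ih]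

end Protocol

/-- The majority vote, with ties resolved in favour of `true`. -/
noncomputable def vote (l : List Bool) : Bool :=
  decide (1 ≤ (l.map fun b => if b then (3 / 2 : ℝ) else 2 / 3).prod)

theorem vote_weight (z : Bool) (l : List Bool) (h : vote l ≠ z) :
    1 ≤ (l.map fun b => if b ≠ z then (3 / 2 : ℝ) else 2 / 3).prod := by
  cases z
  · simpa [vote] using h
  · have hinv : (l.map fun b => if b ≠ true then (3 / 2 : ℝ) else 2 / 3).prod =
        ((l.map fun b => if b then (3 / 2 : ℝ) else 2 / 3).prod)⁻¹ := by
      rw [List.prod_inv, List.map_map]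
      congr 2
      funext b
      cases b <;> norm_num
    have hpos : 0 < (l.map fun b => if b then (3 / 2 : ℝ) else 2 / 3).prod := by
      refine List.prod_pos ?_
      simp only [List.mem_map]
      rintro _ ⟨b, -, rfl⟩
      split_ifs <;> norm_num
    have hlt : (l.map fun b => if b then (3 / 2 : ℝ) else 2 / 3).prod < 1 := by
      simpa [vote] using h
    rw [hinv]
    exact (one_le_inv₀ hpos).2 hlt.le

section Repetition

variable {X Y : Type} [Fintype X] [Fintype Y] {μ : X → Y → ℝ} {m : ℕ} {ρ : Fin m → ℝ}

theorem protCost_runAll_le (hμ : IsDist2 μ) (l : List (Protocol X Y)) (g : List Bool → Bool) :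
    protCost μ (Protocol.runAll l g) ≤ (l.map (protCost μ)).sum := by
  have aux : ∀ {γ : Type} (C : X × Y → γ),
      condEnt (uncurried μ) (fun ω => (l.map fun P => P.transcript ω.1 ω.2).flatten) C ≤
      (l.map fun P => condEnt (uncurried μ) (fun ω => P.transcript ω.1 ω.2) C).sum := by
    intro γ C
    induction l with
    | nil =>
      refine le_of_eq (Finset.sum_eq_zero fun ω _ => ?_)
      by_cases h : prOf (uncurried μ) (fun ω' => C ω' = C ω) = 0 <;> simp [h]
    | cons P l ih =>
      simp only [List.map_cons, List.flatten_cons, List.sum_cons]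
      refine (condEnt_comp_le hμ.isDist.1
        (fun ω => (P.transcript ω.1 ω.2, (l.map fun P => P.transcript ω.1 ω.2).flatten)) C
        (fun t => t.1 ++ t.2)).trans ?_
      exact (condEnt_pair_le hμ.isDist.1 _ _ C).trans (add_le_add_right ih _)
  have hsum : (l.map (protCost μ)).sum =
      (l.map fun P => condEnt (uncurried μ) (fun ω => P.transcript ω.1 ω.2) Prod.snd).sum +
      (l.map fun P => condEnt (uncurried μ) (fun ω => P.transcript ω.1 ω.2) Prod.fst).sum :=
    List.sum_map_add
  rw [hsum]
  unfold protCost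
  simp only [Protocol.transcript_runAll]
  exact add_le_add (aux _) (aux _)

theorem sum_prod_coin (hρ : IsDist ρ) (k : ℕ) : ∑ r : Fin k → Fin m, ∏ i, ρ (r i) = 1 := by
  rw [← Fintype.sum_pow, hρ.2, one_pow]

theorem sum_prod_coin_mul (hρ : IsDist ρ) (k : ℕ) (i : Fin k) (c : Fin m → ℝ) :
    ∑ r : Fin k → Fin m, (∏ j, ρ (r j)) * c (r i) = ∑ r, ρ r * c r := by
  have h : ∀ r : Fin k → Fin m, (∏ j, ρ (r j)) * c (r i) =
      ∏ j, ρ (r j) * if j = i then c (r j) else 1 := by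
    intro r
    rw [Finset.prod_mul_distrib, Finset.prod_ite_eq' Finset.univ i (fun j => c (r j))]
    simp
  rw [Finset.sum_congr rfl fun r _ => h r,
    ← Fintype.prod_sum (fun (j : Fin k) (a : Fin m) => ρ a * if j = i then c a else 1),
    Finset.prod_eq_single i]
  · simp
  · intro b _ hb
    simp [hb, hρ.2]
  · simp

/-- Majority vote over `k` independent runs of a public-coin protocol with pointwise error at most
`3/10`. -/
theorem exists_repetition (hμ : IsDist2 μ) (f : X → Y → Bool) (hρ : IsDist ρ)
    (P : Fin m → Protocol X Y) (herr : ∀ ω, ∑ r, ρ r * ptErr f (P r) ω ≤ 3 / 10) (k : ℕ) :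
    ∃ (M : ℕ) (σ : Fin M → ℝ) (Q : Fin M → Protocol X Y), IsDist σ ∧
      randErr μ f σ Q ≤ (11 / 12) ^ k ∧ infoCost μ σ Q ≤ k * infoCost μ ρ P := by
  obtain ⟨M, ⟨e⟩⟩ : ∃ M, Nonempty (Fin M ≃ (Fin k → Fin m)) :=
    ⟨_, ⟨(Fintype.equivFin (Fin k → Fin m)).symm⟩⟩
  let Q : (Fin k → Fin m) → Protocol X Y := fun r =>
    Protocol.runAll (List.ofFn fun i => P (r i)) vote
  have hσ : IsDist fun s => ∏ i, ρ (e s i) := by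
    refine ⟨fun s => Finset.prod_nonneg fun i _ => hρ.1 _, ?_⟩
    rw [e.sum_comp fun r => ∏ i, ρ (r i), sum_prod_coin hρ]
  refine ⟨_, fun s => ∏ i, ρ (e s i), fun s => Q (e s), hσ, ?_, ?_⟩
  · rw [randErr_eq]
    have hpt : ∀ ω, ∑ s, (∏ i, ρ (e s i)) * ptErr f (Q (e s)) ω ≤ (11 / 12 : ℝ) ^ k := by
      intro ω
      let w : Fin m → ℝ := fun r =>
        if (P r).eval ω.1 ω.2 ≠ f ω.1 ω.2 then 3 / 2 else 2 / 3
      have hw : ∀ r, w r = 2 / 3 + 5 / 6 * ptErr f (P r) ω := by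
        intro r
        simp only [w, ptErr]
        split_ifs <;> norm_num
      have hw0 : ∀ r, 0 ≤ w r := fun r => by simp only [w]; split_ifs <;> norm_num
      rw [e.sum_comp fun r => (∏ i, ρ (r i)) * ptErr f (Q r) ω]
      calc
        _ ≤ ∑ r : Fin k → Fin m, ∏ i, ρ (r i) * w (r i) := by
          refine Finset.sum_le_sum fun r _ => ?_
          rw [Finset.prod_mul_distrib]
          refine mul_le_mul_of_nonneg_left ?_ (Finset.prod_nonneg fun i _ => hρ.1 _)
          unfold ptErr
          split_ifs with h
          · rw [Protocol.eval_runAll] at h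
            simpa [List.map_ofFn, List.prod_ofFn, w] using vote_weight _ _ h
          · exact Finset.prod_nonneg fun i _ => hw0 _
        _ = (∑ r, ρ r * w r) ^ k := (Fintype.sum_pow (fun r => ρ r * w r) k).symm
        _ ≤ (11 / 12) ^ k := by
          refine pow_le_pow_left₀
            (Finset.sum_nonneg fun r _ => mul_nonneg (hρ.1 r) (hw0 r)) ?_ k
          have : ∑ r, ρ r * w r = 2 / 3 + 5 / 6 * ∑ r, ρ r * ptErr f (P r) ω := by
            simp only [hw, mul_add, Finset.sum_add_distrib, ← Finset.sum_mul, hρ.2, one_mul,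
              Finset.mul_sum]
            congr 1
            exact Finset.sum_congr rfl fun r _ => by ring
          rw [this]
          linarith [herr ω]
    refine (Finset.sum_le_sum fun ω _ =>
      mul_le_mul_of_nonneg_left (hpt ω) (hμ.isDist.1 ω)).trans_eq ?_
    rw [← Finset.sum_mul, hμ.isDist.2, one_mul]
  · rw [infoCost_eq hμ hσ, infoCost_eq hμ hρ,
      e.sum_comp fun r => (∏ i, ρ (r i)) * protCost μ (Q r)]
    calc
      _ ≤ ∑ r : Fin k → Fin m, ∑ i, (∏ j, ρ (r j)) * protCost μ (P (r i)) := by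
        refine Finset.sum_le_sum fun r _ => ?_
        rw [← Finset.mul_sum]
        refine mul_le_mul_of_nonneg_left ?_ (Finset.prod_nonneg fun i _ => hρ.1 _)
        refine (protCost_runAll_le hμ _ _).trans_eq ?_
        simp [List.map_ofFn, List.sum_ofFn]
      _ = _ := by
        rw [Finset.sum_comm, Finset.sum_congr rfl fun i _ =>
          sum_prod_coin_mul hρ k i fun a => protCost μ (P a)]
        simp

end Repetition

/-! ## From distributional to pointwise error -/

section Minimax

variable {X Y : Type} [Fintype X] [Fintype Y] {μ ν : X → Y → ℝ}

theorem IsDist2.mix (hμ : IsDist2 μ) (hν : IsDist2 ν) :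
    IsDist2 fun x y => (μ x y + ν x y) / 2 := by
  refine ⟨fun x y => div_nonneg (add_nonneg (hμ.1 x y) (hν.1 x y)) zero_le_two, ?_⟩
  simp only [← Finset.sum_div, Finset.sum_add_distrib, hμ.2, hν.2]
  norm_num

theorem infoCost_le_two_mul_mix (hμ : IsDist2 μ) (hν : IsDist2 ν) {m : ℕ} {ρ : Fin m → ℝ}
    (hρ : IsDist ρ) (P : Fin m → Protocol X Y) :
    infoCost μ ρ P ≤ 2 * infoCost (fun x y => (μ x y + ν x y) / 2) ρ P := by
  rw [infoCost_eq hμ hρ, infoCost_eq (hμ.mix hν) hρ, Finset.mul_sum]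
  refine Finset.sum_le_sum fun r _ => ?_
  rw [mul_left_comm]
  refine mul_le_mul_of_nonneg_left ?_ (hρ.1 r)
  unfold protCost
  rw [mul_add]
  exact add_le_add (condEnt_le_two_mul_mix hμ.isDist.1 hν.isDist.1 _ _)
    (condEnt_le_two_mul_mix hμ.isDist.1 hν.isDist.1 _ _)

/-- If `f` has distributional information cost below `c` for every distribution, then some
protocol has small cost under `μ` and small error under `ν`. -/
theorem exists_cost_and_err (hμ : IsDist2 μ) (hν : IsDist2 ν) (f : X → Y → Bool) {c : ℝ}
    (hc : ∀ ν, IsDist2 ν → ICmu ν f (1 / 8) < c) :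
    ∃ (m : ℕ) (ρ : Fin m → ℝ) (P : Fin m → Protocol X Y), IsDist ρ ∧ infoCost μ ρ P ≤ 2 * c ∧
      ∑ ω, uncurried ν ω * ∑ r, ρ r * ptErr f (P r) ω ≤ 1 / 4 := by
  obtain ⟨m, ρ, P, hρ, he, hP⟩ := exists_infoCost_lt f (by norm_num) (hc _ (hμ.mix hν))
  refine ⟨m, ρ, P, hρ, (infoCost_le_two_mul_mix hμ hν hρ P).trans (by linarith), ?_⟩
  rw [randErr_eq] at he
  have h : ∑ ω, uncurried (fun x y => (μ x y + ν x y) / 2) ω * ∑ r, ρ r * ptErr f (P r) ω =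
      (∑ ω, uncurried μ ω * ∑ r, ρ r * ptErr f (P r) ω +
        ∑ ω, uncurried ν ω * ∑ r, ρ r * ptErr f (P r) ω) / 2 := by
    rw [← Finset.sum_add_distrib, Finset.sum_div]
    exact Finset.sum_congr rfl fun ω _ => by simp only [uncurried]; ring
  have h0 : 0 ≤ ∑ ω, uncurried μ ω * ∑ r, ρ r * ptErr f (P r) ω :=
    Finset.sum_nonneg fun ω _ => mul_nonneg (hμ.isDist.1 ω) <|
      Finset.sum_nonneg fun r _ => mul_nonneg (hρ.1 r) (by unfold ptErr; split_ifs <;> norm_num)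
  linarith

/-- Pointwise error vectors of public-coin protocols of cost at most `B` form a convex set. -/
theorem convex_errVectors (hμ : IsDist2 μ) (f : X → Y → Bool) (B : ℝ) :
    Convex ℝ {v : X × Y → ℝ | ∃ (m : ℕ) (ρ : Fin m → ℝ) (P : Fin m → Protocol X Y),
      IsDist ρ ∧ infoCost μ ρ P ≤ B ∧ v = fun ω => ∑ r, ρ r * ptErr f (P r) ω} := by
  rintro _ ⟨m, ρ, P, hρ, hP, rfl⟩ _ ⟨l, σ, Q, hσ, hQ, rfl⟩ a b ha hb hab
  have hdist : IsDist (Fin.append (a • ρ) (b • σ)) := by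
    refine ⟨fun i => ?_, ?_⟩
    · refine Fin.addCases (fun i => ?_) (fun i => ?_) i
      · simpa using mul_nonneg ha (hρ.1 i)
      · simpa using mul_nonneg hb (hσ.1 i)
    · simp [Fin.sum_univ_add, ← Finset.mul_sum, hρ.2, hσ.2, hab]
  refine ⟨m + l, Fin.append (a • ρ) (b • σ), Fin.append P Q, hdist, ?_, ?_⟩
  · have h : infoCost μ (Fin.append (a • ρ) (b • σ)) (Fin.append P Q) =
        a * infoCost μ ρ P + b * infoCost μ σ Q := by
      rw [infoCost_eq hμ hdist, infoCost_eq hμ hρ, infoCost_eq hμ hσ]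
      simp [Fin.sum_univ_add, Finset.mul_sum, mul_assoc]
    rw [h]
    calc
      _ ≤ a * B + b * B :=
        add_le_add (mul_le_mul_of_nonneg_left hP ha) (mul_le_mul_of_nonneg_left hQ hb)
      _ = B := by rw [← add_mul, hab, one_mul]
  · funext ω
    simp [Fin.sum_univ_add, Finset.mul_sum, mul_assoc]

/-- A minimax argument: if `f` has distributional information cost below `c` for every distribution,
then some protocol has small cost under `μ` and small error at every input. -/
theorem exists_pointwise_err (hμ : IsDist2 μ) (f : X → Y → Bool) {c : ℝ}
    (hc : ∀ ν, IsDist2 ν → ICmu ν f (1 / 8) < c) :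
    ∃ (m : ℕ) (ρ : Fin m → ℝ) (P : Fin m → Protocol X Y), IsDist ρ ∧ infoCost μ ρ P ≤ 2 * c ∧
      ∀ ω, ∑ r, ρ r * ptErr f (P r) ω ≤ 3 / 10 := by
  by_contra! hcon
  let D : Set (X × Y → ℝ) := Set.univ.pi fun _ => Set.Iio (3 / 10)
  obtain ⟨g, u, hgD, hgA⟩ := geometric_hahn_banach_open (s := D)
    (convex_pi fun _ _ => convex_Iio _) (isOpen_set_pi Set.finite_univ fun _ _ => isOpen_Iio)
    (convex_errVectors hμ f (2 * c)) (by
      rw [Set.disjoint_left]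
      rintro v hv ⟨m, ρ, P, hρ, hP, rfl⟩
      obtain ⟨ω, hω⟩ := hcon m ρ P hρ hP
      exact (hω.trans (hv ω trivial)).false)
  let w : X × Y → ℝ := fun ω => g (Pi.single ω 1)
  have hg : ∀ v, g v = ∑ ω, w ω * v ω := by
    intro v
    conv_lhs => rw [pi_eq_sum_univ' v, map_sum]
    refine Finset.sum_congr rfl fun ω _ => ?_
    rw [map_smul, smul_eq_mul, mul_comm]
  have hw : ∀ ω, 0 ≤ w ω := by
    intro ω
    by_contra! hneg
    have hmem : (|u| / w ω) • Pi.single ω (1 : ℝ) ∈ D := by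
      intro ω' _
      have h0 : |u| / w ω ≤ 0 := div_nonpos_of_nonneg_of_nonpos (abs_nonneg u) hneg.le
      by_cases h : ω' = ω
      · subst h
        simp only [Pi.smul_apply, Pi.single_eq_same, smul_eq_mul, mul_one, Set.mem_Iio]
        linarith
      · simp only [Pi.smul_apply, Pi.single_eq_of_ne h, smul_eq_mul, mul_zero, Set.mem_Iio]
        norm_num
    have h := hgD _ hmem
    rw [map_smul, smul_eq_mul, div_mul_cancel₀ _ hneg.ne] at h
    exact (h.trans_le (le_abs_self u)).false
  have hquarter := hgD (fun _ => 1 / 4) fun _ _ => by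
    rw [Set.mem_Iio]; norm_num
  rw [hg, ← Finset.sum_mul] at hquarter
  have hmem : ∀ ν, IsDist2 ν → ∃ v, u ≤ g v ∧ ∑ ω, uncurried ν ω * v ω ≤ 1 / 4 := by
    intro ν hν
    obtain ⟨m, ρ, P, hρ, hP, he⟩ := exists_cost_and_err hμ hν f hc
    exact ⟨_, hgA _ ⟨m, ρ, P, hρ, hP, rfl⟩, he⟩
  rcases (Finset.sum_nonneg fun ω (_ : ω ∈ Finset.univ) => hw ω).eq_or_lt with hs | hs
  · obtain ⟨v, hv, -⟩ := hmem μ hμ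
    have hz : ∀ ω, w ω = 0 := fun ω =>
      (Finset.sum_eq_zero_iff_of_nonneg fun ω _ => hw ω).1 hs.symm ω (Finset.mem_univ ω)
    simp only [hg, hz, zero_mul, Finset.sum_const_zero] at hv hquarter
    exact (hquarter.trans_le hv).false
  · obtain ⟨v, hv, hle⟩ := hmem (fun x y => w (x, y) / ∑ ω, w ω)
      ⟨fun x y => div_nonneg (hw _) hs.le, by
        simp only [← Finset.sum_div]
        rw [← Fintype.sum_prod_type, div_self hs.ne']⟩
    have h : ∑ ω, uncurried (fun x y => w (x, y) / ∑ ω, w ω) ω * v ω = g v / ∑ ω, w ω := by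
      rw [hg, Finset.sum_div]
      exact Finset.sum_congr rfl fun ω _ => by simp only [uncurried]; ring
    rw [h, div_le_iff₀ hs] at hle
    linarith

end Minimax

/-- A number of repetitions, linear in `log (1/δ)`, that pushes the error below `δ`. -/
theorem exists_repetitions {δ : ℝ} (hδ : δ ∈ Set.Ioo (0 : ℝ) (1 / 8)) :
    ∃ k : ℕ, 0 < k ∧ (11 / 12 : ℝ) ^ k ≤ δ ∧ (k : ℝ) ≤ 16 * Real.logb 2 (1 / δ) := by
  have hL : 3 ≤ Real.logb 2 (1 / δ) := by
    rw [Real.le_logb_iff_rpow_le (by norm_num) (one_div_pos.2 hδ.1), le_div_iff₀ hδ.1]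
    have := hδ.2
    norm_num
    linarith
  refine ⟨8 * ⌈Real.logb 2 (1 / δ)⌉₊, ?_, ?_, ?_⟩
  · have : 0 < ⌈Real.logb 2 (1 / δ)⌉₊ := Nat.ceil_pos.2 (by linarith)
    omega
  · rw [pow_mul]
    calc
      _ ≤ (1 / 2 : ℝ) ^ ⌈Real.logb 2 (1 / δ)⌉₊ :=
        pow_le_pow_left₀ (by norm_num) (by norm_num) _
      _ = (2 ^ (⌈Real.logb 2 (1 / δ)⌉₊ : ℝ))⁻¹ := by
        rw [Real.rpow_natCast, one_div, inv_pow]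
      _ ≤ (2 ^ Real.logb 2 (1 / δ))⁻¹ :=
        inv_anti₀ (by positivity)
          (Real.rpow_le_rpow_of_exponent_le (by norm_num) (Nat.le_ceil _))
      _ = δ := by
        rw [Real.rpow_logb (by norm_num) (by norm_num) (one_div_pos.2 hδ.1), one_div, inv_inv]
  · have := (Nat.ceil_lt_add_one (by linarith : 0 ≤ Real.logb 2 (1 / δ))).le
    push_cast
    linarith

/-- **Claim B.2 (error reduction for information complexity).** There is a universal
constant `C > 0` such that for every `f : {0,1}ⁿ × {0,1}ⁿ → {0,1}` and `δ ∈ (0,1/8)`,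
`IC_δ(f) ≤ C · log(1/δ) · IC_{1/8}(f)`. -/
theorem IC_error_reduction :
    ∃ C : ℝ, 0 < C ∧
      ∀ (n : ℕ) (f : (Fin n → Bool) → (Fin n → Bool) → Bool) (δ : ℝ),
        δ ∈ Set.Ioo (0 : ℝ) (1 / 8) →
        IC f δ ≤ C * Real.logb 2 (1 / δ) * IC f (1 / 8) := by
  refine ⟨32, by norm_num, fun n f δ hδ => ?_⟩
  obtain ⟨k, hk, hkδ, hkL⟩ := exists_repetitions hδ
  have hI := IC_nonneg f (1 / 8)
  have hk' : (0 : ℝ) < k := by exact_mod_cast hk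
  refine Real.sSup_le ?_ (mul_nonneg (by linarith) hI)
  rintro c ⟨μ, hμ, rfl⟩
  have hle : ICmu μ f δ / (2 * k) ≤ IC f (1 / 8) := by
    refine le_of_forall_pos_le_add fun η hη => ?_
    obtain ⟨m, ρ, P, hρ, hP, herr⟩ := exists_pointwise_err hμ f
      (c := IC f (1 / 8) + η) fun ν hν => by
        linarith [ICmu_le_IC hν f (show (0 : ℝ) ≤ 1 / 8 by norm_num)]
    obtain ⟨M, σ, Q, hσ, hQerr, hQ⟩ := exists_repetition hμ f hρ P herr k
    rw [div_le_iff₀ (by positivity)]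
    have h1 := ICmu_le hμ f hσ Q (hQerr.trans hkδ)
    have h2 := mul_le_mul_of_nonneg_left hP hk'.le
    linarith
  rw [div_le_iff₀ (by positivity)] at hle
  have h3 := mul_le_mul_of_nonneg_left hkL hI
  linarith
end
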